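/- arXiv:1508.05062 — 3 statements merged into one kernel-verified Lean document; each statement's English description precedes it below -/
import Mathlib

section
/- If Σ_{i=2}^{∞} p_i F_{2(i−1)} < +∞, then the nonnegative sequence μ defined by μ_0 = 1 and μ_i = ξ_i for i ≥ 1 is summable (μ ∈ ℓ¹(ℕ)) and satisfies μS = μ; hence the Markov chain with transition matrix S admits an invariant probability measure and is positive recurrent. -/
/-- Fibonacci sequence with `F 0 = 1`, `F 1 = 2`, `F (n+2) = F (n+1) + F n`. -/
def fibF : ℕ → ℕ
  | 0 => 1
  | 1 => 2
  | (n+2) => fibF (n+1) + fibF n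

lemma fibF_pos : ∀ n, 0 < fibF n
  | 0 => by simp [fibF]
  | 1 => by simp [fibF]
  | (n+2) => by
      have h1 := fibF_pos (n+1)
      simp only [fibF]
      omega

/-- Zeckendorf digits of `N` in the base `fibF`: `N = ∑ i, zeck N i * fibF i`,
with `zeck N i ∈ {0,1}` and no two consecutive `1`'s. -/
def zeck (N i : ℕ) : ℕ :=
  if h : N = 0 then 0
  else if i = Nat.findGreatest (fun j => fibF j ≤ N) N then 1
  else zeck (N - fibF (Nat.findGreatest (fun j => fibF j ≤ N) N)) i
termination_by N
decreasing_by
  exact Nat.sub_lt (Nat.pos_of_ne_zero h) (fibF_pos _)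

lemma zeck_eq_zero_of_lt : ∀ N, ∀ i, N < i → zeck N i = 0 := by
  intro N
  induction N using Nat.strong_induction_on with
  | _ N ih =>
    intro i hi
    rw [zeck]
    split
    · rfl
    · rename_i h
      have hkN : Nat.findGreatest (fun j => fibF j ≤ N) N ≤ N := Nat.findGreatest_le N
      rw [if_neg (by omega)]
      exact ih _ (Nat.sub_lt (Nat.pos_of_ne_zero h) (fibF_pos _)) i
        (lt_of_le_of_lt (Nat.sub_le _ _) hi)

lemma exists_break0 (N : ℕ) : ∃ i, ¬(zeck N (2*i+1) = 1 ∧ zeck N (2*i) = 0) := by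
  refine ⟨N + 1, ?_⟩
  have h : zeck N (2*(N+1)+1) = 0 := zeck_eq_zero_of_lt N _ (by omega)
  simp [h]

lemma exists_break1 (N : ℕ) : ∃ i, ¬(zeck N (2*i+2) = 1 ∧ zeck N (2*i+1) = 0) := by
  refine ⟨N + 1, ?_⟩
  have h : zeck N (2*(N+1)+2) = 0 := zeck_eq_zero_of_lt N _ (by omega)
  simp [h]

/-- The number `s` of `10`-blocks carried in the stochastic Fibonacci adding machine:
if the digits of `N` end with `00(10)^s` (case `ε₀ = 0`) or with `00(10)^s1`
(case `ε₀ = 1`), this returns `s`. -/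
def carryLen (N : ℕ) : ℕ :=
  if zeck N 0 = 0 then Nat.find (exists_break0 N) else Nat.find (exists_break1 N)

/-- `Pprod p t = p 1 * p 2 * ⋯ * p t`. -/
def Pprod (p : ℕ → ℝ) (t : ℕ) : ℝ := ∏ i ∈ Finset.Icc 1 t, p i

/-- The transition matrix `S` of the Fibonacci stochastic adding machine associated to
the probability sequence `p`:  `S N N = 1 - p 1`;  if the digits of `N` end with
`00(10)^s` then `S N (N+1) = p 1 ⋯ p (s+1)` and `S N (N+1-F (2m)) = p 1 ⋯ p m * (1 - p (m+1))`
for `1 ≤ m ≤ s`;  if the digits of `N` end with `00(10)^s1` then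
`S N (N+1) = p 1 ⋯ p (s+2)` and `S N (N+1-F (2m-1)) = p 1 ⋯ p m * (1 - p (m+1))` for
`1 ≤ m ≤ s+1`;  all other entries vanish. -/
noncomputable def Smat (p : ℕ → ℝ) (N M : ℕ) : ℝ :=
  (if M = N then 1 - p 1 else 0) +
  if zeck N 0 = 0 then
    (if M = N + 1 then Pprod p (carryLen N + 1) else 0) +
    ∑ m ∈ Finset.Icc 1 (carryLen N),
      (if M = N + 1 - fibF (2*m) then Pprod p m * (1 - p (m+1)) else 0)
  else
    (if M = N + 1 then Pprod p (carryLen N + 2) else 0) +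
    ∑ m ∈ Finset.Icc 1 (carryLen N + 1),
      (if M = N + 1 - fibF (2*m - 1) then Pprod p m * (1 - p (m+1)) else 0)

/-- `xiF p n = ξ_{F_n}`: `ξ_{F_0} = ξ_1 = 1` and `ξ_{F_n} = p (⌊(n+1)/2⌋+1)` for `n ≥ 1`. -/
noncomputable def xiF (p : ℕ → ℝ) (n : ℕ) : ℝ := if n = 0 then 1 else p ((n+1)/2 + 1)

/-- `xi p N = ξ_N = ∏ᵢ ξ_{F_i}^{ε_i(N)}` where `(ε_i(N))` are the Zeckendorf digits of `N`
(the unique sequence with `ξ 1 = 1`, `ξ 2 = p 2`, `ξ (F n) = p (⌊(n+1)/2⌋+1)` and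
`ξ (F n + k) = ξ (F n) * ξ k` for `1 ≤ k ≤ F (n-1) - 1`); also `xi p 0 = 1`. -/
noncomputable def xi (p : ℕ → ℝ) (N : ℕ) : ℝ :=
  ∏ i ∈ Finset.range (N+1), (xiF p i) ^ (zeck N i)

def Zk (A : Finset ℕ) : Prop := ∀ i ∈ A, i + 1 ∉ A

def vl (A : Finset ℕ) : ℕ := ∑ i ∈ A, fibF i

lemma fibF_lt_succ (n : ℕ) : fibF n < fibF (n+1) := by
  cases n with
  | zero => simp [fibF]
  | succ n =>
    have := fibF_pos n
    show fibF (n+1) < fibF (n+1) + fibF n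
    omega

lemma fibF_strictMono : StrictMono fibF := strictMono_nat_of_lt_succ fibF_lt_succ

lemma vl_lt : ∀ (n : ℕ) (A : Finset ℕ), Zk A → (∀ i ∈ A, i < n) → vl A < fibF n
  | 0, A, _, h => by
      have : A = ∅ := Finset.eq_empty_of_forall_notMem (fun i hi => by simpa using h i hi)
      simp [this, vl, fibF]
  | 1, A, _, h => by
      have : A ⊆ {0} := fun i hi => by have := h i hi; simp; omega
      have := Finset.sum_le_sum_of_subset (f := fibF) this
      simp [fibF] at this
      simp [vl, fibF]; omega
  | (n+2), A, hz, h => by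
      by_cases hn : n+1 ∈ A
      · have h1 := vl_lt n (A.erase (n+1))
          (fun i hi hi' => hz i (Finset.mem_of_mem_erase hi) (Finset.mem_of_mem_erase hi'))
          (fun i hi => by
            have h2 := Finset.mem_of_mem_erase hi
            have h3 := h i h2
            have h4 := Finset.ne_of_mem_erase hi
            have h5 : i ≠ n := fun e => hz i h2 (e ▸ hn)
            omega)
        have h2 := Finset.add_sum_erase A fibF hn
        unfold vl at *
        simp only [fibF]
        omega
      · have h1 := vl_lt (n+1) A hz (fun i hi => by
            have h3 := h i hi
            have h5 : i ≠ n+1 := fun e => hn (e ▸ hi)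
            omega)
        exact h1.trans (fibF_lt_succ _)

lemma exists_rep : ∀ (n N : ℕ), N < fibF n → ∃ A : Finset ℕ, Zk A ∧ (∀ i ∈ A, i < n) ∧ vl A = N
  | 0, N, h => ⟨∅, by simp [Zk], by simp, by simp [fibF] at h; simp [vl, h]⟩
  | 1, N, h => by
      by_cases h0 : N = 0
      · exact ⟨∅, by simp [Zk], by simp, by simp [vl, h0]⟩
      · refine ⟨{0}, by simp [Zk], by simp, ?_⟩
        simp [fibF] at h; simp [vl, fibF]; omega
  | (n+2), N, h => by
      by_cases hN : N < fibF (n+1)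
      · obtain ⟨A, h1, h2, h3⟩ := exists_rep (n+1) N hN
        exact ⟨A, h1, fun i hi => (h2 i hi).trans (by omega), h3⟩
      · have h' : N < fibF (n+1) + fibF n := h
        obtain ⟨A, h1, h2, h3⟩ := exists_rep n (N - fibF (n+1)) (by omega)
        refine ⟨insert (n+1) A, ?_, ?_, ?_⟩
        · intro i hi hi'
          rw [Finset.mem_insert] at hi hi'
          rcases hi with hi | hi <;> rcases hi' with hi' | hi'
          · omega
          · have := h2 _ hi'; omega
          · have := h2 _ hi; omega
          · exact h1 i hi hi'
        · intro i hi
          rcases Finset.mem_insert.1 hi with hi | hi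
          · omega
          · have := h2 _ hi; omega
        · unfold vl at *
          rw [Finset.sum_insert (fun hh => by have := h2 _ hh; omega), h3]
          omega

lemma le_fibF (n : ℕ) : n < fibF n := by
  induction n with
  | zero => simp [fibF]
  | succ n ih => have := fibF_lt_succ n; omega

lemma exists_rep' (N : ℕ) : ∃ A : Finset ℕ, Zk A ∧ vl A = N := by
  obtain ⟨A, h1, _, h3⟩ := exists_rep N N (le_fibF N)
  exact ⟨A, h1, h3⟩

lemma zeck_vl (A : Finset ℕ) (hz : Zk A) (i : ℕ) : zeck (vl A) i = if i ∈ A then 1 else 0 := by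
  induction A using Finset.strongInduction with
  | _ A ih =>
    rw [zeck]
    rcases A.eq_empty_or_nonempty with rfl | hne
    · simp [vl]
    · set k := A.max' hne with hk
      have hkA : k ∈ A := A.max'_mem hne
      have hle : fibF k ≤ vl A := Finset.single_le_sum (f := fibF) (fun _ _ => Nat.zero_le _) hkA
      have hlt : vl A < fibF (k+1) := vl_lt (k+1) A hz (fun i hi => Nat.lt_succ_of_le (A.le_max' i hi))
      have hpos := fibF_pos k
      have hg : Nat.findGreatest (fun j => fibF j ≤ vl A) (vl A) = k := by
        rw [Nat.findGreatest_eq_iff]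
        refine ⟨(le_fibF k).le.trans hle, fun _ => hle, fun n hn _ hc => ?_⟩
        have := fibF_strictMono.monotone (Nat.succ_le_of_lt hn)
        simp only [Nat.succ_eq_add_one] at this
        omega
      rw [dif_neg (by omega), hg]
      have he : vl A - fibF k = vl (A.erase k) := by
        have h2 := Finset.add_sum_erase A fibF hkA
        unfold vl; omega
      rw [he, ih _ (Finset.erase_ssubset hkA)
        (fun i hi hi' => hz i (Finset.mem_of_mem_erase hi) (Finset.mem_of_mem_erase hi'))]
      by_cases hik : i = k
      · simp [hik, hkA]
      · simp [hik]

lemma xi_vl (p : ℕ → ℝ) (A : Finset ℕ) (hz : Zk A) : xi p (vl A) = ∏ i ∈ A, xiF p i := by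
  unfold xi
  have hsub : A ⊆ Finset.range (vl A + 1) := by
    intro i hi
    have h1 := zeck_vl A hz i
    rw [if_pos hi] at h1
    by_contra hc
    rw [zeck_eq_zero_of_lt _ _ (by simpa using hc)] at h1
    omega
  rw [← Finset.prod_subset hsub]
  · refine Finset.prod_congr rfl (fun i hi => ?_)
    rw [zeck_vl A hz, if_pos hi, pow_one]
  · intro i _ hi
    rw [zeck_vl A hz, if_neg hi, pow_zero]

def Gs (n : ℕ) : Finset ℕ := (Finset.range n).filter (fun i => (n - i) % 2 = 1)

lemma mem_Gs {n i : ℕ} : i ∈ Gs n ↔ i < n ∧ (n - i) % 2 = 1 := by simp [Gs]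

lemma Gs_succ (n : ℕ) : Gs (n+2) = insert (n+1) (Gs n) := by
  ext i; rw [Finset.mem_insert, mem_Gs, mem_Gs]; omega

lemma notMem_Gs (n : ℕ) : n + 1 ∉ Gs n := by rw [mem_Gs]; omega

lemma vl_Gs : ∀ n, vl (Gs n) + 1 = fibF n
  | 0 => by simp [vl, Gs, fibF]
  | 1 => by
      have : Gs 1 = {0} := by ext i; simp [mem_Gs]; omega
      simp [this, vl, fibF]
  | (n+2) => by
      have := vl_Gs n
      unfold vl at *
      rw [Gs_succ, Finset.sum_insert (notMem_Gs n)]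
      simp only [fibF]; omega

/-- coefficient -/
noncomputable def wq (p : ℕ → ℝ) (n : ℕ) : ℝ := ∏ i ∈ Finset.range n, (if i = 0 then p 1 else xiF p i)

lemma Pprod_succ (p : ℕ → ℝ) (t : ℕ) : Pprod p (t+1) = Pprod p t * p (t+1) := by
  unfold Pprod; rw [Finset.prod_Icc_succ_top (by omega)]

lemma xi_Gs (p : ℕ → ℝ) : ∀ n, (∏ i ∈ Gs n, xiF p i) * Pprod p ((n+1)/2) = wq p n
  | 0 => by simp [Gs, Pprod, wq]
  | 1 => by
      have : Gs 1 = {0} := by ext i; simp [mem_Gs]; omega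
      simp [this, Pprod, wq, xiF]
  | (n+2) => by
      have h := xi_Gs p n
      rw [Gs_succ, Finset.prod_insert (notMem_Gs n),
        show (n+2+1)/2 = (n+1)/2+1 by omega, Pprod_succ]
      unfold wq at *
      rw [Finset.prod_range_succ, Finset.prod_range_succ, ← h]
      rcases n with _ | n
      · simp; ring
      · simp [xiF]; ring

lemma low_rep (n : ℕ) (B : Finset ℕ) (hB : Zk B) (hlow : ∀ i ∈ B, n < i) :
    Zk (B ∪ Gs n) ∧ vl (B ∪ Gs n) + 1 = vl B + fibF n ∧
    ∀ p : ℕ → ℝ, xi p (vl (B ∪ Gs n)) = xi p (vl B) * ∏ i ∈ Gs n, xiF p i := by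
  have hd : Disjoint B (Gs n) := by
    rw [Finset.disjoint_left]; intro i h1 h2
    rw [mem_Gs] at h2; have := hlow i h1; omega
  have hz : Zk (B ∪ Gs n) := by
    intro i hi hi'
    rw [Finset.mem_union, mem_Gs] at hi hi'
    rcases hi with hi | hi <;> rcases hi' with hi' | hi'
    · exact hB i hi hi'
    · have := hlow _ hi; omega
    · have := hlow _ hi'; omega
    · omega
  refine ⟨hz, ?_, fun p => ?_⟩
  · have := vl_Gs n
    unfold vl at *
    rw [Finset.sum_union hd]; omega
  · rw [xi_vl _ _ hz, xi_vl _ _ hB, Finset.prod_union hd]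

/-- `N` ends with `0` at position `n` then `1010...` below. -/
def En (n N : ℕ) : Prop := ∃ B, Zk B ∧ (∀ i ∈ B, n < i) ∧ N = vl (B ∪ Gs n)

lemma En_iff (n : ℕ) (A : Finset ℕ) (hA : Zk A) :
    En n (vl A) ↔ (∀ i ≤ n, i ∈ A ↔ i ∈ Gs n) := by
  constructor
  · rintro ⟨B, hB, hl, he⟩ i hi
    have h1 := zeck_vl A hA i
    rw [he, zeck_vl _ (low_rep n B hB hl).1] at h1
    have h2 : i ∉ B := fun h => by have := hl i h; omega
    simp only [Finset.mem_union, h2, false_or] at h1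
    by_cases h3 : i ∈ A <;> by_cases h4 : i ∈ Gs n <;> simp_all
  · intro h
    refine ⟨A.filter (fun i => n < i), ?_, ?_, ?_⟩
    · intro i hi hi'
      exact hA i (Finset.mem_filter.1 hi).1 (Finset.mem_filter.1 hi').1
    · intro i hi; exact (Finset.mem_filter.1 hi).2
    · congr 1
      ext i
      rw [Finset.mem_union, Finset.mem_filter]
      by_cases hi : i ≤ n
      · rw [h i hi]; constructor
        · exact Or.inr
        · rintro (h | h)
          · omega
          · exact h
      · have : i ∉ Gs n := by rw [mem_Gs]; omega
        simp only [this, or_false]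
        constructor
        · intro h; exact ⟨h, by omega⟩
        · exact fun h => h.1

lemma zeck_eq_one_iff (A : Finset ℕ) (hA : Zk A) (i : ℕ) : zeck (vl A) i = 1 ↔ i ∈ A := by
  rw [zeck_vl A hA]; split <;> simp_all
lemma zeck_eq_zero_iff (A : Finset ℕ) (hA : Zk A) (i : ℕ) : zeck (vl A) i = 0 ↔ i ∉ A := by
  rw [zeck_vl A hA]; split <;> simp_all

lemma carry_even (N m : ℕ) (hm : 1 ≤ m) : (zeck N 0 = 0 ∧ m ≤ carryLen N) ↔ En (2*m) N := by
  obtain ⟨A, hA, rfl⟩ := exists_rep' N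
  rw [En_iff _ _ hA]
  have key : (∀ i < m, (2*i+1 ∈ A ∧ 2*i ∉ A)) ↔ (∀ i ≤ 2*m, i ∈ A ↔ i ∈ Gs (2*m)) := by
    constructor
    · intro h i hi
      rw [mem_Gs]
      obtain ⟨k, rfl | rfl⟩ : ∃ k, i = 2*k ∨ i = 2*k+1 := ⟨i/2, by omega⟩
      · have : 2*k ∉ A := by
          by_cases hk : k < m
          · exact (h k hk).2
          · have h2 := h (m-1) (by omega)
            have h3 := hA _ h2.1
            rwa [show 2*(m-1)+1+1 = 2*k by omega] at h3
        simp only [this, false_iff]; omega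
      · simp only [(h k (by omega)).1, true_iff]; omega
    · intro h i hi
      rw [h _ (by omega), h _ (by omega), mem_Gs, mem_Gs]; omega
  rw [← key]
  unfold carryLen
  constructor
  · rintro ⟨h0, h1⟩
    rw [if_pos h0, Nat.le_find_iff] at h1
    intro i hi
    have := not_not.1 (h1 i hi)
    rwa [zeck_eq_one_iff A hA, zeck_eq_zero_iff A hA] at this
  · intro h
    have h0 : zeck (vl A) 0 = 0 := by rw [zeck_eq_zero_iff A hA]; exact (h 0 (by omega)).2
    refine ⟨h0, ?_⟩
    rw [if_pos h0, Nat.le_find_iff]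
    intro i hi
    rw [not_not, zeck_eq_one_iff A hA, zeck_eq_zero_iff A hA]
    exact h i hi

lemma carry_odd (N m : ℕ) (hm : 1 ≤ m) :
    (zeck N 0 ≠ 0 ∧ m ≤ carryLen N + 1) ↔ En (2*m-1) N := by
  obtain ⟨A, hA, rfl⟩ := exists_rep' N
  rw [En_iff _ _ hA]
  have key : (0 ∈ A ∧ ∀ i < m-1, (2*i+2 ∈ A ∧ 2*i+1 ∉ A)) ↔
      (∀ i ≤ 2*m-1, i ∈ A ↔ i ∈ Gs (2*m-1)) := by
    constructor
    · rintro ⟨h0, h⟩ i hi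
      have he : ∀ k < m, 2*k ∈ A := by
        intro k hk
        rcases k with _ | k
        · exact h0
        · exact (h k (by omega)).1
      rw [mem_Gs]
      obtain ⟨k, rfl | rfl⟩ : ∃ k, i = 2*k ∨ i = 2*k+1 := ⟨i/2, by omega⟩
      · simp only [he k (by omega), true_iff]; omega
      · simp only [hA _ (he k (by omega)), false_iff]; omega
    · intro h
      refine ⟨by rw [h _ (by omega), mem_Gs]; omega, fun i hi => ?_⟩
      rw [h _ (by omega), h _ (by omega), mem_Gs, mem_Gs]; omega
  rw [← key]
  unfold carryLen
  have hz : zeck (vl A) 0 ≠ 0 ↔ 0 ∈ A := by rw [Ne, zeck_eq_zero_iff A hA, not_not]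
  have hmm : ∀ x, m ≤ x + 1 ↔ m - 1 ≤ x := by intro x; omega
  rw [hmm]
  constructor
  · rintro ⟨h0, h1⟩
    rw [if_neg h0, Nat.le_find_iff] at h1
    refine ⟨hz.1 h0, fun i hi => ?_⟩
    have := not_not.1 (h1 i hi)
    rwa [zeck_eq_one_iff A hA, zeck_eq_zero_iff A hA] at this
  · rintro ⟨h0, h⟩
    refine ⟨hz.2 h0, ?_⟩
    rw [if_neg (hz.2 h0), Nat.le_find_iff]
    intro i hi
    rw [not_not, zeck_eq_one_iff A hA, zeck_eq_zero_iff A hA]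
    exact h i hi

/-- The reset part of the transition matrix. -/
noncomputable def Tm (p : ℕ → ℝ) (N M : ℕ) : ℝ :=
  if zeck N 0 = 0 then
    ∑ m ∈ Finset.Icc 1 (carryLen N),
      (if M = N + 1 - fibF (2*m) then Pprod p m * (1 - p (m+1)) else 0)
  else
    ∑ m ∈ Finset.Icc 1 (carryLen N + 1),
      (if M = N + 1 - fibF (2*m - 1) then Pprod p m * (1 - p (m+1)) else 0)

/-- The increment part of the transition matrix. -/
noncomputable def Um (p : ℕ → ℝ) (N : ℕ) : ℝ :=
  if zeck N 0 = 0 then Pprod p (carryLen N + 1) else Pprod p (carryLen N + 2)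

lemma Smat_eq (p : ℕ → ℝ) (N M : ℕ) : Smat p N M =
    (if M = N then 1 - p 1 else 0) + (if M = N + 1 then Um p N else 0) + Tm p N M := by
  unfold Smat Um Tm
  split_ifs <;> ring

lemma En_ge {n N : ℕ} (h : En n N) : fibF n ≤ N + 1 := by
  obtain ⟨B, hB, hl, rfl⟩ := h
  have := (low_rep n B hB hl).2.1
  omega

lemma Tm_zero (p : ℕ → ℝ) (N j : ℕ)
    (h : ∀ n, 1 ≤ n → En n N → j + fibF n ≠ N + 1) : Tm p N j = 0 := by
  unfold Tm
  split_ifs with h0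
  · refine Finset.sum_eq_zero (fun m hm => if_neg ?_)
    rw [Finset.mem_Icc] at hm
    have hE := (carry_even N m hm.1).1 ⟨h0, hm.2⟩
    have := h _ (by omega) hE
    have := En_ge hE
    omega
  · refine Finset.sum_eq_zero (fun m hm => if_neg ?_)
    rw [Finset.mem_Icc] at hm
    have hE := (carry_odd N m hm.1).1 ⟨h0, hm.2⟩
    have := h _ (by omega) hE
    have := En_ge hE
    omega

lemma Tm_val (p : ℕ → ℝ) (N j n : ℕ) (hn : 1 ≤ n) (hE : En n N) (hj : j + fibF n = N + 1) :
    Tm p N j = Pprod p ((n+1)/2) * (1 - xiF p n) := by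
  have hinj := fibF_strictMono.injective
  unfold Tm
  obtain ⟨m, hm⟩ : ∃ m, n = 2*m ∨ n = 2*m-1 := ⟨(n+1)/2, by omega⟩
  have hmm : (n+1)/2 = m := by omega
  have hx : xiF p n = p (m+1) := by
    unfold xiF; rw [if_neg (by omega), hmm]
  rw [hx, hmm]
  rcases hm with rfl | rfl
  · obtain ⟨h0, h1⟩ := (carry_even N m (by omega)).2 hE
    rw [if_pos h0, Finset.sum_eq_single_of_mem m (by rw [Finset.mem_Icc]; omega)]
    · rw [if_pos (by omega)]
    · intro k hk hkm
      rw [Finset.mem_Icc] at hk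
      have hE' := En_ge ((carry_even N k hk.1).1 ⟨h0, hk.2⟩)
      refine if_neg (fun hc => hkm ?_)
      have := @hinj (2*k) (2*m) (by omega)
      omega
  · obtain ⟨h0, h1⟩ := (carry_odd N m (by omega)).2 hE
    rw [if_neg h0, Finset.sum_eq_single_of_mem m (by rw [Finset.mem_Icc]; omega)]
    · rw [if_pos (by omega)]
    · intro k hk hkm
      rw [Finset.mem_Icc] at hk
      have hE' := En_ge ((carry_odd N k hk.1).1 ⟨h0, hk.2⟩)
      refine if_neg (fun hc => hkm ?_)
      have := @hinj (2*k-1) (2*m-1) (by omega)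
      omega

/-- Value of the reset terms, for `j = vl B`. -/
lemma term_low (p : ℕ → ℝ) (B : Finset ℕ) (hB : Zk B) (n : ℕ) (hn : 1 ≤ n)
    (hl : ∀ i ∈ B, n < i) :
    xi p (vl B + fibF n - 1) * Tm p (vl B + fibF n - 1) (vl B)
      = xi p (vl B) * (wq p n - wq p (n+1)) := by
  obtain ⟨h1, h2, h3⟩ := low_rep n B hB hl
  have he : vl B + fibF n - 1 = vl (B ∪ Gs n) := by omega
  rw [he, Tm_val p _ _ n hn ⟨B, hB, hl, rfl⟩ (by omega), h3]
  have : wq p (n+1) = wq p n * xiF p n := by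
    unfold wq; rw [Finset.prod_range_succ, if_neg (by omega)]
  rw [this, ← xi_Gs]; ring

lemma term_not_low (p : ℕ → ℝ) (B : Finset ℕ) (hB : Zk B) (N : ℕ)
    (h : ∀ n, 1 ≤ n → vl B + fibF n = N + 1 → ∃ i ∈ B, i ≤ n) : Tm p N (vl B) = 0 := by
  apply Tm_zero
  rintro n hn ⟨C, hC, hl, rfl⟩ he
  obtain ⟨i, hi, hin⟩ := h n hn he
  have h2 := (low_rep n C hC hl).2.1
  have h3 : vl B = vl C := by omega
  have h4 := (zeck_eq_one_iff B hB i).2 hi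
  rw [h3, zeck_eq_one_iff C hC] at h4
  have := hl i h4
  omega

lemma incr_term (p : ℕ → ℝ) (B : Finset ℕ) (hB : Zk B) (r : ℕ) (hr : r ∈ B)
    (hl : ∀ i ∈ B, r ≤ i) (j : ℕ) (hj : vl B = j + 1) :
    xi p j * Um p j = xi p (vl B) * wq p (max r 1) := by
  set C := B.erase r with hC
  have hCz : Zk C := fun i hi hi' => hB i (Finset.mem_of_mem_erase hi) (Finset.mem_of_mem_erase hi')
  have hCl : ∀ i ∈ C, r + 1 < i := by
    intro i hi
    have h1 := Finset.mem_of_mem_erase hi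
    have h2 := Finset.ne_of_mem_erase hi
    have h3 := hl i h1
    have h4 : i ≠ r + 1 := fun e => hB r hr (e ▸ h1)
    omega
  obtain ⟨h1, h2, h3⟩ := low_rep r C hCz (fun i hi => by have := hCl i hi; omega)
  have hv : fibF r + vl C = vl B := Finset.add_sum_erase B fibF hr
  have hjv : j = vl (C ∪ Gs r) := by omega
  have hxi : xi p (vl B) = xiF p r * xi p (vl C) := by
    rw [xi_vl p B hB, xi_vl p C hCz]; exact (Finset.mul_prod_erase B _ hr).symm
  have hE : En r j := ⟨C, hCz, fun i hi => by have := hCl i hi; omega, hjv⟩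
  have hnE : ¬ En (r+2) j := by
    rw [hjv, En_iff _ _ h1]
    intro h
    have h5 := (h (r+1) (by omega)).2 (by rw [mem_Gs]; omega)
    rw [Finset.mem_union, mem_Gs] at h5
    rcases h5 with h5 | h5
    · have := hCl _ h5; omega
    · omega
  have hU : Um p j = Pprod p ((r+1)/2 + 1) := by
    unfold Um
    obtain ⟨s, rfl | rfl⟩ : ∃ s, r = 2*s ∨ r = 2*s+1 := ⟨r/2, by omega⟩
    · have h0 : zeck j 0 = 0 := by
        rw [hjv, zeck_eq_zero_iff _ h1, Finset.mem_union, mem_Gs]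
        rintro (h | h)
        · have := hCl _ h; omega
        · omega
      have hc : carryLen j = s := by
        apply le_antisymm
        · by_contra hcon
          exact hnE ((carry_even j (s+1) (by omega)).1 ⟨h0, by omega⟩)
        · rcases Nat.eq_zero_or_pos s with h | h
          · omega
          · exact ((carry_even j s h).2 hE).2
      rw [if_pos h0, hc, show (2*s+1)/2 = s by omega]
    · have h0 := (carry_odd j (s+1) (by omega)).2 hE
      have hc : carryLen j = s := by
        apply le_antisymm
        · by_contra hcon
          exact hnE ((carry_odd j (s+2) (by omega)).1 ⟨h0.1, by omega⟩)
        · have := h0.2; omega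
      rw [if_neg h0.1, hc, show (2*s+1+1)/2 = s+1 by omega]
  rw [hU, hjv, h3, hxi, Pprod_succ]
  rcases Nat.eq_zero_or_pos r with h | h
  · subst h
    simp [Gs, Pprod, wq, xiF]
  · rw [max_eq_left h, ← xi_Gs]
    have : xiF p r = p ((r+1)/2+1) := by unfold xiF; rw [if_neg (by omega)]
    rw [this]; ring

lemma xiF_bd (p : ℕ → ℝ) (hp : ∀ i, 1 ≤ i → 0 < p i ∧ p i ≤ 1) (n : ℕ) :
    0 < xiF p n ∧ xiF p n ≤ 1 := by
  unfold xiF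
  split_ifs
  · norm_num
  · exact hp _ (by omega)

lemma xi_nonneg (p : ℕ → ℝ) (hp : ∀ i, 1 ≤ i → 0 < p i ∧ p i ≤ 1) (N : ℕ) : 0 ≤ xi p N :=
  Finset.prod_nonneg (fun i _ => pow_nonneg (xiF_bd p hp i).1.le _)

lemma xi_le_one (p : ℕ → ℝ) (hp : ∀ i, 1 ≤ i → 0 < p i ∧ p i ≤ 1) (N : ℕ) : xi p N ≤ 1 :=
  Finset.prod_le_one (fun i _ => pow_nonneg (xiF_bd p hp i).1.le _)
    (fun i _ => pow_le_one₀ (xiF_bd p hp i).1.le (xiF_bd p hp i).2)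

lemma xi_block (p : ℕ → ℝ) (hp : ∀ i, 1 ≤ i → 0 < p i ∧ p i ≤ 1) (k N : ℕ)
    (h1 : fibF (2*k+1) ≤ N) (h2 : N < fibF (2*k+3)) : xi p N ≤ p (k+2) := by
  obtain ⟨A, hA, hlt, rfl⟩ := exists_rep _ _ h2
  obtain ⟨i, hi, hik⟩ : ∃ i ∈ A, 2*k+1 ≤ i := by
    by_contra hc
    push Not at hc
    have := vl_lt _ A hA hc
    omega
  have hx : xiF p i = p (k+2) := by
    have := hlt i hi
    unfold xiF
    rw [if_neg (by omega), show (i+1)/2+1 = k+2 by omega]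
  rw [xi_vl p A hA, ← Finset.mul_prod_erase A _ hi, hx]
  have h3 : ∏ x ∈ A.erase i, xiF p x ≤ 1 :=
    Finset.prod_le_one (fun i _ => (xiF_bd p hp i).1.le) (fun i _ => (xiF_bd p hp i).2)
  exact mul_le_of_le_one_right (hp _ (by omega)).1.le h3

lemma xi_partial (p : ℕ → ℝ) (hp : ∀ i, 1 ≤ i → 0 < p i ∧ p i ≤ 1) (k : ℕ) :
    ∑ N ∈ Finset.range (fibF (2*k+1)), xi p N
      ≤ 2 + ∑ i ∈ Finset.range k, p (i+2) * (fibF (2*(i+1)) : ℝ) := by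
  induction k with
  | zero =>
    have := xi_le_one p hp 0
    have := xi_le_one p hp 1
    simp [fibF, Finset.sum_range_succ]; linarith
  | succ k ih =>
    have hle : fibF (2*k+1) ≤ fibF (2*(k+1)+1) := fibF_strictMono.monotone (by omega)
    have hF : fibF (2*(k+1)+1) = fibF (2*(k+1)) + fibF (2*k+1) := rfl
    rw [Finset.sum_range_succ, ← Finset.sum_range_add_sum_Ico _ hle]
    have hb : ∑ N ∈ Finset.Ico (fibF (2*k+1)) (fibF (2*(k+1)+1)), xi p N
        ≤ p (k+2) * (fibF (2*(k+1)) : ℝ) := by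
      have := Finset.sum_le_card_nsmul (Finset.Ico (fibF (2*k+1)) (fibF (2*(k+1)+1))) (xi p) (p (k+2))
        (fun N hN => by
          rw [Finset.mem_Ico] at hN
          exact xi_block p hp k N hN.1 hN.2)
      rw [Nat.card_Ico, hF, Nat.add_sub_cancel, nsmul_eq_mul] at this
      rw [hF, mul_comm (p (k+2))]; exact this
    linarith

lemma xi_summable (p : ℕ → ℝ) (hp : ∀ i, 1 ≤ i → 0 < p i ∧ p i ≤ 1)
    (hsum : Summable (fun i : ℕ => p (i+2) * (fibF (2*(i+1)) : ℝ))) :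
    Summable (fun i : ℕ => xi p i) := by
  refine summable_of_sum_range_le (c := 2 + ∑' i, p (i+2) * (fibF (2*(i+1)) : ℝ))
    (xi_nonneg p hp) (fun n => ?_)
  have h1 : n ≤ fibF (2*n+1) := by have := le_fibF (2*n+1); omega
  have h2 := Finset.sum_le_sum_of_subset_of_nonneg (f := xi p) (Finset.range_mono h1)
    (fun i _ _ => xi_nonneg p hp i)
  have h3 := xi_partial p hp n
  have h4 := hsum.sum_le_tsum (Finset.range n)
    (fun i _ => mul_nonneg (hp (i+2) (by omega)).1.le (Nat.cast_nonneg _))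
  linarith

lemma wq_succ (p : ℕ → ℝ) (n : ℕ) (hn : 1 ≤ n) : wq p (n+1) = wq p n * xiF p n := by
  unfold wq; rw [Finset.prod_range_succ, if_neg (by omega)]

lemma wq_bd (p : ℕ → ℝ) (hp : ∀ i, 1 ≤ i → 0 < p i ∧ p i ≤ 1) (n : ℕ) :
    0 ≤ wq p n ∧ wq p n ≤ 1 := by
  have h : ∀ i, 0 ≤ (if i = 0 then p 1 else xiF p i) ∧ (if i = 0 then p 1 else xiF p i) ≤ 1 := by
    intro i
    split_ifs
    · exact ⟨(hp 1 le_rfl).1.le, (hp 1 le_rfl).2⟩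
    · exact ⟨(xiF_bd p hp i).1.le, (xiF_bd p hp i).2⟩
  exact ⟨Finset.prod_nonneg (fun i _ => (h i).1),
    Finset.prod_le_one (fun i _ => (h i).1) (fun i _ => (h i).2)⟩

lemma wq_tendsto (p : ℕ → ℝ) (hp : ∀ i, 1 ≤ i → 0 < p i ∧ p i ≤ 1)
    (hsum : Summable (fun i : ℕ => p (i+2) * (fibF (2*(i+1)) : ℝ))) :
    Filter.Tendsto (wq p) Filter.atTop (nhds 0) := by
  have h0 := hsum.tendsto_atTop_zero
  have hd : Filter.Tendsto (fun n : ℕ => n / 2) Filter.atTop Filter.atTop :=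
    Filter.tendsto_atTop_atTop.2 (fun b => ⟨2*b, fun a ha => by omega⟩)
  have h1 := h0.comp hd
  rw [← Filter.tendsto_add_atTop_iff_nat 2]
  refine squeeze_zero (fun n => (wq_bd p hp _).1) (fun n => ?_) h1
  rw [wq_succ p (n+1) (by omega)]
  have hx : xiF p (n+1) = p (n/2+2) := by
    unfold xiF; rw [if_neg (by omega), show (n+1+1)/2+1 = n/2+2 by omega]
  have h2 := wq_bd p hp (n+1)
  have h3 := hp (n/2+2) (by omega)
  have h4 : (1:ℝ) ≤ fibF (2*(n/2+1)) := by exact_mod_cast fibF_pos _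
  rw [hx]
  simp only [Function.comp]
  nlinarith [mul_le_mul_of_nonneg_right h2.2 h3.1.le, mul_le_mul_of_nonneg_left h4 h3.1.le]

lemma reset_hasSum (p : ℕ → ℝ) (B : Finset ℕ) (hB : Zk B) (a : ℝ)
    (h : HasSum (fun n : ℕ => if (∀ i ∈ B, n + 1 < i) then
      xi p (vl B) * (wq p (n+1) - wq p (n+2)) else 0) a) :
    HasSum (fun N => xi p N * Tm p N (vl B)) a := by
  set φ : ℕ → ℕ := fun n => vl B + fibF (n+1) - 1 with hφ
  have hpos := fun n => fibF_pos n
  have hinj : Function.Injective φ := by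
    intro x y hxy
    have h1 := hpos (x+1)
    have h2 := hpos (y+1)
    simp only [hφ] at hxy
    have := fibF_strictMono.injective (show fibF (x+1) = fibF (y+1) by omega)
    omega
  rw [← hinj.hasSum_iff]
  · convert h using 2 with n
    simp only [Function.comp, hφ]
    split_ifs with hl
    · exact term_low p B hB (n+1) (by omega) hl
    · rw [term_not_low p B hB, mul_zero]
      intro m hm he
      have h1 := hpos (n+1)
      have := fibF_strictMono.injective (show fibF m = fibF (n+1) by omega)
      push Not at hl
      rw [this]; exact hl
  · intro N hN
    rw [term_not_low p B hB, mul_zero]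
    intro n hn he
    exact absurd ⟨n-1, by simp only [hφ]; rw [Nat.sub_add_cancel hn]; omega⟩ hN

lemma total_hasSum (p : ℕ → ℝ) (j : ℕ) (a b : ℝ)
    (hT : HasSum (fun N => xi p N * Tm p N j) a)
    (hU : HasSum (fun N => xi p N * (if j = N + 1 then Um p N else 0)) b) :
    HasSum (fun N => xi p N * Smat p N j) (xi p j * (1 - p 1) + b + a) := by
  have hD : HasSum (fun N => xi p N * (if j = N then 1 - p 1 else 0)) (xi p j * (1 - p 1)) := by
    convert hasSum_single j ?_ using 1
    · simp
    · intro N hN; rw [if_neg hN.symm, mul_zero]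
  convert (hD.add hU).add hT using 2 with N
  rw [Smat_eq]; ring

/-- If `∑_{i ≥ 2} p i * F (2*(i-1)) < +∞`, then the nonnegative
sequence `μ` given by `μ 0 = 1` and `μ i = ξ i` for `i ≥ 1` (that is, `μ = xi p`) is
summable and satisfies `μ S = μ`; hence the chain admits an invariant probability
measure and is positive recurrent. -/
theorem stmt7 (p : ℕ → ℝ) (hp : ∀ i, 1 ≤ i → 0 < p i ∧ p i ≤ 1)
    (hsum : Summable (fun i : ℕ => p (i+2) * (fibF (2*(i+1)) : ℝ))) :
    Summable (fun i : ℕ => xi p i) ∧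
    ∀ j : ℕ, xi p j = ∑' i : ℕ, xi p i * Smat p i j := by

  refine ⟨xi_summable p hp hsum, fun j => ?_⟩
  symm
  have hw1 : wq p 1 = p 1 := by simp [wq]
  obtain ⟨B, hB, rfl⟩ := exists_rep' j
  rcases B.eq_empty_or_nonempty with rfl | hne
  · have hT : HasSum (fun N => xi p N * Tm p N (vl ∅)) (xi p (vl ∅) * wq p 1) := by
      apply reset_hasSum p ∅ hB
      simp only [Finset.notMem_empty, false_imp_iff, implies_true, if_true]
      apply HasSum.mul_left
      rw [hasSum_iff_tendsto_nat_of_nonneg]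
      · have h1 := wq_tendsto p hp hsum
        rw [← Filter.tendsto_add_atTop_iff_nat 1] at h1
        have h2 := h1.const_sub (wq p 1)
        rw [sub_zero] at h2
        refine h2.congr (fun n => ?_)
        exact (Finset.sum_range_sub' (fun n => wq p (n+1)) n).symm
      · intro n
        rw [wq_succ p (n+1) (by omega)]
        nlinarith [wq_bd p hp (n+1), xiF_bd p hp (n+1)]
    have hU : HasSum (fun N => xi p N * (if vl ∅ = N + 1 then Um p N else 0)) 0 := by
      convert hasSum_zero using 2 with N
      simp [vl]
    rw [(total_hasSum p _ _ _ hT hU).tsum_eq, hw1]; ring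
  · set r := B.min' hne with hr
    have hrB : r ∈ B := B.min'_mem hne
    have hl : ∀ i ∈ B, r ≤ i := fun i hi => B.min'_le i hi
    have hlow : ∀ n, (∀ i ∈ B, n < i) ↔ n < r :=
      fun n => ⟨fun h => h r hrB, fun h i hi => h.trans_le (hl i hi)⟩
    have hT : HasSum (fun N => xi p N * Tm p N (vl B))
        (xi p (vl B) * (wq p 1 - wq p (max r 1))) := by
      apply reset_hasSum p B hB
      simp only [hlow]
      have := hasSum_sum_of_ne_finset_zero (L := SummationFilter.unconditional ℕ)
        (f := fun n : ℕ => if n + 1 < r then xi p (vl B) * (wq p (n+1) - wq p (n+2)) else 0)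
        (s := Finset.range (r-1))
        (fun n hn => if_neg (by rw [Finset.mem_range] at hn; omega))
      convert this using 1
      rw [Finset.sum_congr rfl (fun n hn => if_pos (by rw [Finset.mem_range] at hn; omega)),
        ← Finset.mul_sum, Finset.sum_range_sub' (fun n => wq p (n+1)),
        show r - 1 + 1 = max r 1 by omega]
    obtain ⟨k, hk⟩ : ∃ k, vl B = k + 1 := by
      have h1 : fibF r ≤ vl B :=
        Finset.single_le_sum (f := fibF) (fun _ _ => Nat.zero_le _) hrB
      have := fibF_pos r
      exact ⟨vl B - 1, by omega⟩
    have hU : HasSum (fun N => xi p N * (if vl B = N + 1 then Um p N else 0))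
        (xi p (vl B) * wq p (max r 1)) := by
      rw [← incr_term p B hB r hrB hl k hk]
      convert hasSum_single k ?_ using 1
      · rw [if_pos hk]
      · intro N hN; rw [if_neg (by omega), mul_zero]
    rw [(total_hasSum p _ _ _ hT hU).tsum_eq, hw1]; ring
end

section
/- Let h(z) = a_2 z² + a_3 z³ + … + a_n zⁿ with n ≥ 2 and a_2, …, a_n ∈ ℂ, h not identically zero, and suppose liminf_{i→∞} p_i > 0. If p_3 < 1/2 and either p_2 = 1 or 0 < p_2 < 1 − p_3, then the set F_h is not connected. -/
/-- `rr p n = r_n = p (⌊(n+1)/2⌋ + 1)`. -/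
noncomputable def rr (p : ℕ → ℝ) (n : ℕ) : ℝ := p ((n+1)/2 + 1)

/-- `qF p z n = q_{F_n}(z)`. -/
noncomputable def qF (p : ℕ → ℝ) (z : ℂ) : ℕ → ℂ
  | 0 => (z - (1 - (p 1 : ℂ))) / (p 1 : ℂ)
  | 1 => (1 / (p 2 : ℂ)) * (qF p z 0) ^ 2 - (1 / (p 2 : ℂ) - 1)
  | (n+2) => (1 / (rr p (n+2) : ℂ)) * qF p z (n+1) * qF p z n - (1 / (rr p (n+2) : ℂ) - 1)

/-- The sequence `φ_n` associated to a polynomial `h`: `φ_0(z) = z`, `φ_1(z) = h(z)`,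
`φ_n(z) = (1/r_n) φ_{n-1}(z) φ_{n-2}(z) - (1/r_n - 1)` for `n ≥ 2`. -/
noncomputable def phiSeq (p : ℕ → ℝ) (h : Polynomial ℂ) : ℕ → ℂ → ℂ
  | 0 => fun z => z
  | 1 => fun z => h.eval z
  | (n+2) => fun z =>
      (1 / (rr p (n+2) : ℂ)) * phiSeq p h (n+1) z * phiSeq p h n z - (1 / (rr p (n+2) : ℂ) - 1)

/-- The fibered filled Julia set `F_h = {z : (φ_n(z))ₙ is bounded}`. -/
def Fset (p : ℕ → ℝ) (h : Polynomial ℂ) : Set ℂ :=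
  {z : ℂ | ∃ C : ℝ, ∀ n : ℕ, ‖phiSeq p h n z‖ ≤ C}

open Polynomial Filter Topology

lemma aux_log {W U : Set ℂ} (hW : IsOpen W) (hc : IsPreconnected W) (hd : Disjoint U W)
    {a b : ℂ} (ha : a ∈ W) (hb : b ∈ W) :
    ∃ g : ℂ → ℂ, DifferentiableOn ℂ g U ∧ ∀ z ∈ U, Complex.exp (g z) * (z - a) = z - b := by
  have hne : ∀ z ∈ U, ∀ x ∈ W, z - x ≠ 0 := by
    intro z hz x hx h0
    rw [sub_eq_zero] at h0
    subst h0
    exact Set.disjoint_left.1 hd hz hx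
  refine hc.induction₂ (P := fun a b => ∃ g : ℂ → ℂ, DifferentiableOn ℂ g U ∧
    ∀ z ∈ U, Complex.exp (g z) * (z - a) = z - b) ?_ ?_ ?_ ha hb
  · intro x hx
    obtain ⟨ε, hε, hball⟩ := Metric.isOpen_iff.1 hW x hx
    refine eventually_nhdsWithin_of_eventually_nhds ?_
    filter_upwards [Metric.ball_mem_nhds x hε] with y hy
    have key : ∀ z ∈ U, 1 + (x - y) / (z - x) ∈ Complex.slitPlane := by
      intro z hz
      apply Complex.mem_slitPlane_of_norm_lt_one
      have h1 : ε ≤ ‖z - x‖ := by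
        by_contra hlt
        push Not at hlt
        exact Set.disjoint_left.1 hd hz (hball (by simpa [dist_eq_norm] using hlt))
      have h2 : ‖x - y‖ < ε := by
        rw [← dist_eq_norm, dist_comm]; exact hy
      rw [norm_div, div_lt_one (by linarith)]
      linarith
    refine ⟨fun z => Complex.log (1 + (x - y) / (z - x)), ?_, ?_⟩
    · intro z hz
      apply DifferentiableAt.differentiableWithinAt
      apply DifferentiableAt.clog
      · have := hne z hz x hx
        fun_prop (disch := assumption)
      · exact key z hz
    · intro z hz
      have := hne z hz x hx
      rw [Complex.exp_log (Complex.slitPlane_ne_zero (key z hz))]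
      field_simp
      ring
  · rintro x y z hx hy hz ⟨g, hg, hg'⟩ ⟨k, hk, hk'⟩
    refine ⟨fun w => k w + g w, hk.add hg, fun w hw => ?_⟩
    rw [Complex.exp_add, mul_assoc, hg' w hw, hk' w hw]
  · rintro x y hx hy ⟨g, hg, hg'⟩
    refine ⟨fun w => - g w, hg.neg, fun w hw => ?_⟩
    rw [← hg' w hw, ← mul_assoc, ← Complex.exp_add]
    simp

lemma aux_prod {W U : Set ℂ} (hW : IsOpen W) (hc : IsPreconnected W) (hd : Disjoint U W)
    {a : ℂ} (ha : a ∈ W) (s : Multiset ℂ) (hs : ∀ b ∈ s, b ∈ W) :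
    ∃ g : ℂ → ℂ, DifferentiableOn ℂ g U ∧
      ∀ z ∈ U, (s.map (fun b => z - b)).prod = (z - a) ^ s.card * Complex.exp (g z) := by
  induction s using Multiset.induction_on with
  | empty => exact ⟨fun _ => 0, differentiableOn_const 0, by simp⟩
  | cons b s ih =>
    obtain ⟨g, hg, hg'⟩ := ih (fun c hc => hs c (Multiset.mem_cons_of_mem hc))
    obtain ⟨k, hk, hk'⟩ := aux_log hW hc hd ha (hs b (Multiset.mem_cons_self b s))
    refine ⟨fun z => k z + g z, hk.add hg, fun z hz => ?_⟩
    rw [Multiset.map_cons, Multiset.prod_cons, hg' z hz, ← hk' z hz, Complex.exp_add,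
      Multiset.card_cons]
    ring

lemma aux_root (q : ℂ[X]) (hN : 0 < q.natDegree) {R : ℝ} (hR : 0 < R)
    (hc : IsPreconnected {z : ℂ | ‖q.eval z‖ < R}) :
    ∃ ψ : ℂ → ℂ, DifferentiableOn ℂ ψ {z : ℂ | R < ‖q.eval z‖} ∧
      ∀ z ∈ {z : ℂ | R < ‖q.eval z‖}, ψ z ^ q.natDegree = q.eval z := by
  have hsp := IsAlgClosed.splits q
  have hq0 : q ≠ 0 := by rintro rfl; simp at hN
  have hcard : q.roots.card = q.natDegree := hsp.natDegree_eq_card_roots.symm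
  have hWo : IsOpen {z : ℂ | ‖q.eval z‖ < R} := isOpen_lt (by fun_prop) continuous_const
  have hd : Disjoint {z : ℂ | R < ‖q.eval z‖} {z : ℂ | ‖q.eval z‖ < R} := by
    rw [Set.disjoint_left]
    intro z hz hz'
    have h1 : R < ‖q.eval z‖ := hz
    have h2 : ‖q.eval z‖ < R := hz'
    exact lt_asymm h1 h2
  have hroots : ∀ b ∈ q.roots, b ∈ {z : ℂ | ‖q.eval z‖ < R} := by
    intro b hb
    have : q.eval b = 0 := (mem_roots hq0).1 hb
    simpa [this] using hR
  obtain ⟨a, ha⟩ : ∃ a, a ∈ q.roots := Multiset.card_pos_iff_exists_mem.1 (by omega)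
  obtain ⟨g, hg, hg'⟩ := aux_prod hWo hc hd (hroots a ha) q.roots hroots
  obtain ⟨c, hcc⟩ := IsAlgClosed.exists_pow_nat_eq q.leadingCoeff hN
  refine ⟨fun z => c * (z - a) * Complex.exp (g z / q.natDegree), ?_, ?_⟩
  · fun_prop
  · intro z hz
    have hN' : (q.natDegree : ℂ) ≠ 0 := by exact_mod_cast hN.ne'
    rw [hsp.eval_eq_prod_roots, hg' z hz, mul_pow, mul_pow, hcc, ← Complex.exp_nat_mul,
      mul_div_cancel₀ _ hN', hcard]
    ring

lemma aux_bdd (q : ℂ[X]) (hN : 0 < q.natDegree) (C : ℝ) :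
    Bornology.IsBounded {z : ℂ | ‖q.eval z‖ ≤ C} := by
  have h1 : Tendsto (fun z : ℂ => ‖q.eval z‖) (Bornology.cobounded ℂ) atTop :=
    q.tendsto_norm_atTop (natDegree_pos_iff_degree_pos.1 hN) tendsto_norm_cobounded_atTop
  have h2 := h1.eventually (eventually_gt_atTop C)
  rw [← Bornology.isCobounded_compl_iff]
  filter_upwards [h2] with z hz
  simpa using hz

lemma aux_conn {r : ℝ} (hr : 0 < r) : IsPreconnected {w : ℂ | r < ‖w‖} := by
  have : {w : ℂ | r < ‖w‖} = Complex.exp '' {z : ℂ | Real.log r < z.re} := by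
    ext w
    constructor
    · intro hw
      have hw' : r < ‖w‖ := hw
      have h0 : w ≠ 0 := by rintro rfl; simp at hw'; linarith
      refine ⟨Complex.log w, ?_, Complex.exp_log h0⟩
      simp only [Set.mem_ofPred_eq, Complex.log_re]
      exact Real.log_lt_log hr hw'
    · rintro ⟨z, hz, rfl⟩
      have hz' : Real.log r < z.re := hz
      simp only [Set.mem_ofPred_eq, Complex.norm_exp]
      rwa [← Real.log_lt_iff_lt_exp hr]
  rw [this]
  exact (convex_halfSpace_re_gt _).isPreconnected.image _ Complex.continuous_exp.continuousOn

lemma aux_surj (q : ℂ[X]) (hN : 0 < q.natDegree) {R : ℝ} (hR : 0 < R)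
    {ψ : ℂ → ℂ} (hψ : DifferentiableOn ℂ ψ {z : ℂ | R < ‖q.eval z‖})
    (hψ' : ∀ z ∈ {z : ℂ | R < ‖q.eval z‖}, ψ z ^ q.natDegree = q.eval z)
    {z0 : ℂ} (hz0 : R < ‖q.eval z0‖) {w : ℂ} (hw : R < ‖w ^ q.natDegree‖) :
    ∃ z, R < ‖q.eval z‖ ∧ ψ z = w := by
  set U := {z : ℂ | R < ‖q.eval z‖} with hU
  have hUo : IsOpen U := isOpen_lt continuous_const (by fun_prop)
  have hN0 : q.natDegree ≠ 0 := hN.ne'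
  set r : ℝ := R ^ ((q.natDegree : ℝ)⁻¹) with hr
  have hr0 : 0 < r := Real.rpow_pos_of_pos hR _
  have hrN : r ^ q.natDegree = R := Real.rpow_inv_natCast_pow hR.le hN0
  have hiff : ∀ w : ℂ, R < ‖w ^ q.natDegree‖ ↔ r < ‖w‖ := by
    intro w
    rw [norm_pow, ← hrN]
    exact pow_lt_pow_iff_left₀ hr0.le (norm_nonneg _) hN0
  have hopen : IsOpen (ψ '' U) := by
    rw [isOpen_iff_mem_nhds]
    rintro _ ⟨z, hz, rfl⟩
    have han : AnalyticAt ℂ ψ z := hψ.analyticAt (hUo.mem_nhds hz)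
    rcases han.eventually_constant_or_nhds_le_map_nhds with h | h
    · exfalso
      have h2 : ∀ᶠ y in 𝓝 z, (q - C (q.eval z)).IsRoot y := by
        filter_upwards [h, hUo.mem_nhds hz] with y hy hyU
        simp only [IsRoot.def, eval_sub, eval_C]
        rw [← hψ' y hyU, ← hψ' z hz, hy, sub_self]
      have hinf : Set.Infinite {y | (q - C (q.eval z)).IsRoot y} :=
        infinite_of_mem_nhds z h2
      have := eq_zero_of_infinite_isRoot _ hinf
      have h3 : q = C (q.eval z) := sub_eq_zero.1 this
      rw [h3] at hN
      simp at hN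
    · exact h (image_mem_map (hUo.mem_nhds hz))
  have hsub : {w : ℂ | r < ‖w‖} ⊆ ψ '' U := by
    apply (aux_conn hr0).subset_of_closure_inter_subset hopen
    · refine ⟨ψ z0, ?_, z0, hz0, rfl⟩
      rw [Set.mem_ofPred_eq, ← hiff, hψ' z0 hz0]
      exact hz0
    · rintro v ⟨hv, hv'⟩
      obtain ⟨u, hu, hlim⟩ := mem_closure_iff_seq_limit.1 hv
      choose x hxU hx using hu
      have hq : Tendsto (fun n => q.eval (x n)) atTop (𝓝 (v ^ q.natDegree)) := by
        have := hlim.pow q.natDegree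
        refine this.congr fun n => ?_
        rw [← hx n, hψ' _ (hxU n)]
      obtain ⟨C, hC⟩ := (Metric.isBounded_range_of_tendsto _ hq).exists_norm_le
      obtain ⟨y, -, φ, hφ, hy⟩ := tendsto_subseq_of_bounded (aux_bdd q hN C) (x := x)
        (fun n => hC _ (Set.mem_range_self n))
      have hqy : q.eval y = v ^ q.natDegree := by
        refine tendsto_nhds_unique ?_ (hq.comp hφ.tendsto_atTop)
        exact (q.continuous.tendsto y).comp hy
      have hyU : y ∈ U := by
        rw [hU, Set.mem_ofPred_eq, hqy, hiff]
        exact hv'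
      refine ⟨y, hyU, ?_⟩
      have h1 : Tendsto (fun n => ψ (x (φ n))) atTop (𝓝 (ψ y)) :=
        ((hψ.continuousOn.continuousAt (hUo.mem_nhds hyU)).tendsto).comp hy
      refine tendsto_nhds_unique h1 ?_
      refine (hlim.comp hφ.tendsto_atTop).congr fun n => ?_
      simp [hx]
  obtain ⟨z, hz, h⟩ := hsub ((hiff w).1 hw)
  exact ⟨z, hz, h⟩

lemma no_crit (q : ℂ[X]) (hN : 0 < q.natDegree) {R : ℝ} (hR : 0 < R)
    (hc : IsPreconnected {z : ℂ | ‖q.eval z‖ < R}) {z0 : ℂ} (hz0 : R < ‖q.eval z0‖) :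
    q.derivative.eval z0 ≠ 0 := by
  intro hder
  obtain ⟨ψ, hψ, hψ'⟩ := aux_root q hN hR hc
  have hN0 : q.natDegree ≠ 0 := hN.ne'
  set N := q.natDegree with hNdef
  set w0 := ψ z0 with hw0
  have hw0N : w0 ^ N = q.eval z0 := hψ' z0 hz0
  have hw00 : w0 ≠ 0 := by
    intro h0
    rw [h0, zero_pow hN0] at hw0N
    rw [← hw0N] at hz0
    simp at hz0
    linarith
  have hζ := Complex.isPrimitiveRoot_exp N hN0
  set ζ := Complex.exp (2 * Real.pi * Complex.I / N) with hζdef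
  have hpow : ∀ i : ℕ, (ζ ^ i * w0) ^ N = q.eval z0 := by
    intro i
    rw [mul_pow, ← pow_mul, mul_comm i N, pow_mul, hζ.pow_eq_one, one_pow, one_mul, hw0N]
  have hex : ∀ i : ℕ, ∃ z, R < ‖q.eval z‖ ∧ ψ z = ζ ^ i * w0 := fun i =>
    aux_surj q hN hR hψ hψ' hz0 (by rw [← hNdef, hpow]; exact hz0)
  choose x hxU hx using hex
  set Q := q - C (q.eval z0) with hQ
  have hQdeg : Q.natDegree = N := natDegree_sub_C
  have hQ0 : Q ≠ 0 := by
    intro h0; rw [h0] at hQdeg; simp at hQdeg; exact hN0 hQdeg.symm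
  have hinj : Set.InjOn x (Finset.range N : Finset ℕ) := by
    intro i hi j hj hij
    have : ζ ^ i * w0 = ζ ^ j * w0 := by rw [← hx i, ← hx j, hij]
    have := mul_right_cancel₀ hw00 this
    exact hζ.pow_inj (by simpa using hi) (by simpa using hj) this
  have hsub : (Finset.range N).image x ⊆ Q.roots.toFinset := by
    intro y hy
    obtain ⟨i, -, rfl⟩ := Finset.mem_image.1 hy
    rw [Multiset.mem_toFinset, mem_roots hQ0]
    simp only [hQ, IsRoot.def, eval_sub, eval_C]
    rw [← hψ' _ (hxU i), hx, hpow, sub_self]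
  have hle := Finset.card_le_card hsub
  rw [Finset.card_image_of_injOn hinj, Finset.card_range] at hle
  have hnodup : Q.roots.Nodup := by
    rw [← Multiset.toFinset_card_eq_card_iff_nodup]
    refine le_antisymm (Multiset.toFinset_card_le _) ?_
    exact (Q.card_roots').trans (hQdeg ▸ hle)
  have h1 : 1 < Q.rootMultiplicity z0 := by
    rw [one_lt_rootMultiplicity_iff_isRoot hQ0]
    simp [hQ, hder]
  have h2 := Multiset.nodup_iff_count_le_one.1 hnodup z0
  rw [count_roots] at h2
  omega

/-- The recursion in terms of norms. -/
structure NormRec (r : ℕ → ℝ) (x : ℕ → ℝ) : Prop where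
  nonneg : ∀ n, 0 ≤ x n
  up : ∀ n, r (n+2) * x (n+2) ≤ x (n+1) * x n + (1 - r (n+2))
  low : ∀ n, x (n+1) * x n ≤ r (n+2) * x (n+2) + (1 - r (n+2))

lemma NormRec.grow {r x : ℕ → ℝ} (H : NormRec r x) (hr : ∀ n, 0 < r (n+2) ∧ r (n+2) ≤ 1)
    {n : ℕ} (h0 : 1 < x n) (h1 : 1 < x (n+1)) : x (n+1) * x n ≤ x (n+2) := by
  have h := H.low n
  obtain ⟨a, b⟩ := hr n
  have : 1 < x (n+1) * x n := by nlinarith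
  have : r (n+2) * (x (n+1) * x n) ≤ r (n+2) * x (n+2) := by nlinarith
  exact le_of_mul_le_mul_left this a

lemma NormRec.gt_one {r x : ℕ → ℝ} (H : NormRec r x) (hr : ∀ n, 0 < r (n+2) ∧ r (n+2) ≤ 1)
    {n : ℕ} (h0 : 1 < x n) (h1 : 1 < x (n+1)) (k : ℕ) : 1 < x (n+k) ∧ 1 < x (n+k+1) := by
  induction k with
  | zero => exact ⟨h0, h1⟩
  | succ k ih =>
    refine ⟨ih.2, ?_⟩
    have := H.grow hr ih.1 ih.2
    have h2 : n + (k+1) + 1 = n + k + 2 := by ring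
    rw [h2]
    nlinarith [ih.1, ih.2]

lemma NormRec.unbdd {r x : ℕ → ℝ} (H : NormRec r x) (hr : ∀ n, 0 < r (n+2) ∧ r (n+2) ≤ 1)
    {n : ℕ} (h0 : 1 < x n) (h1 : 1 < x (n+1)) (C : ℝ) : ∃ m, n ≤ m ∧ C < x m := by
  have hb : ∀ k, x n * x (n+1) ≤ x (n+k+2) := by
    intro k
    induction k with
    | zero => have := H.grow hr h0 h1; simpa [mul_comm] using this
    | succ k ih =>
      obtain ⟨a, b⟩ := H.gt_one hr h0 h1 (k+1)
      have := H.grow hr a b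
      have e1 : n + (k+1) + 1 = n + k + 2 := by ring
      have e2 : n + (k+1) + 2 = n + (k+1) + 2 := rfl
      rw [e1] at this b
      nlinarith
  set t := x n * x (n+1) with ht
  have ht1 : 1 < t := by nlinarith
  have hp : ∀ k, t ^ k ≤ x (n+k+2) := by
    intro k
    induction k with
    | zero => simpa using (ht1.le.trans (hb 0))
    | succ k ih =>
      cases k with
      | zero => simpa using hb 1
      | succ k =>
        obtain ⟨a, b⟩ := H.gt_one hr h0 h1 (k+2)
        have h := H.grow hr a b
        have e1 : n + (k+2) + 1 = n + (k+1) + 2 := by ring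
        have e2 : n + (k+2) = n + k + 2 := by ring
        rw [e1, e2] at h
        have e3 : n + k + 2 + 2 = n + (k+1+1) + 2 := by ring
        rw [e3] at h
        have h3 := hb k
        have h4 : (0:ℝ) < t ^ (k+1) := by positivity
        calc t ^ (k+1+1) = t ^ (k+1) * t := pow_succ _ _
          _ ≤ x (n + (k+1) + 2) * x (n+k+2) := by gcongr
          _ ≤ _ := h
  obtain ⟨k, hk⟩ := pow_unbounded_of_one_lt C ht1
  exact ⟨n+k+2, by omega, hk.trans_le (hp k)⟩

lemma NormRec.next {r x : ℕ → ℝ} (H : NormRec r x) {δ S : ℝ} (hδ : 0 < δ)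
    (hr : ∀ n, δ ≤ r (n+2) ∧ r (n+2) ≤ 1) (hS : 2 ≤ δ * S) (h01 : S ≤ x 0 → 1 < x 1)
    (h12 : x 0 ≤ 1 → x 1 < S) (m : ℕ) (hm : S ≤ x m) : 1 < x (m+1) := by
  have hδ1 : δ ≤ 1 := (hr 0).1.trans (hr 0).2
  have hS1 : 2 ≤ S := by nlinarith
  have hprev : ∀ m, S ≤ x (m+1) → x (m+2) ≤ 1 → x (m+1) * x m ≤ 1 := by
    intro m hm h
    have := H.low m
    obtain ⟨a, b⟩ := hr m
    nlinarith
  have : (S ≤ x m → 1 < x (m+1)) ∧ (S ≤ x (m+1) → 1 < x (m+2)) := by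
    clear hm
    induction m with
    | zero =>
      refine ⟨h01, fun h => ?_⟩
      by_contra hc
      push Not at hc
      have h1 := hprev 0 h hc
      have h2 := H.nonneg 0
      have : x 0 ≤ 1 := by
        have : x (0+1) = x 1 := rfl
        nlinarith
      exact absurd (h12 this) (not_lt.2 h)
    | succ m ih =>
      refine ⟨ih.2, fun h => ?_⟩
      by_contra hc
      push Not at hc
      have h1 := hprev (m+1) h hc
      have n0 := H.nonneg m
      have n1 := H.nonneg (m+1)
      have h2 : x (m+1) ≤ 1 := by
        have e : x (m+1+1) = x (m+2) := rfl
        nlinarith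
      have h3 := H.up m
      obtain ⟨a, b⟩ := hr m
      have e : x (m+1+1) = x (m+2) := rfl
      rw [e] at h h1
      have h4 : 1 ≤ x (m+1) * x m := by nlinarith
      have h5 : S ≤ x m := by
        by_contra h6
        push Not at h6
        nlinarith
      exact absurd (ih.1 h5) (not_lt.2 h2)
  exact this.1 hm

lemma NormRec.nest {r x : ℕ → ℝ} (H : NormRec r x) {δ S R : ℝ} (hδ : 0 < δ)
    (hr : ∀ n, δ ≤ r (n+2) ∧ r (n+2) ≤ 1) (hS : 2 ≤ δ * S) (h01 : S ≤ x 0 → 1 < x 1)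
    (h12 : x 0 ≤ 1 → x 1 < S) (hR : S + 1 ≤ δ * R) (m : ℕ) (hm : R ≤ x (m+2)) :
    1 < x (m+1) ∧ R < x (m+3) := by
  have hδ1 : δ ≤ 1 := (hr 0).1.trans (hr 0).2
  have hS1 : 2 ≤ S := by nlinarith
  have hR1 : S + 1 ≤ R := by nlinarith
  have h1 : 1 < x (m+1) := by
    by_contra hc
    push Not at hc
    have h3 := H.up m
    obtain ⟨a, b⟩ := hr m
    have n0 := H.nonneg m
    have n1 := H.nonneg (m+1)
    have : S ≤ x m := by nlinarith
    exact absurd (H.next hδ hr hS h01 h12 m this) (not_lt.2 hc)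
  refine ⟨h1, ?_⟩
  have h2 : 1 < x (m+1+1) := by
    have e : x (m+1+1) = x (m+2) := rfl
    linarith
  have := H.grow (fun n => ⟨hδ.trans_le (hr n).1, (hr n).2⟩) h1 h2
  have e : x (m+1+1) = x (m+2) := rfl
  have e' : x (m+1+2) = x (m+3) := rfl
  nlinarith

lemma NormRec.of_rec {r : ℕ → ℝ} {f : ℕ → ℂ} (hr : ∀ n, 0 < r (n+2) ∧ r (n+2) ≤ 1)
    (hf : ∀ n, f (n+2) = (1 / (r (n+2) : ℂ)) * f (n+1) * f n - (1 / (r (n+2) : ℂ) - 1)) :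
    NormRec r (fun n => ‖f n‖) := by
  have key : ∀ n, (r (n+2) : ℂ) * f (n+2) = f (n+1) * f n - ((1 - r (n+2) : ℝ) : ℂ) := by
    intro n
    have h0 : (r (n+2) : ℂ) ≠ 0 := by exact_mod_cast (hr n).1.ne'
    rw [hf n]
    push_cast
    field_simp
  have n1 : ∀ n, ‖(r (n+2) : ℂ) * f (n+2)‖ = r (n+2) * ‖f (n+2)‖ := by
    intro n
    rw [norm_mul, Complex.norm_real, Real.norm_of_nonneg (hr n).1.le]
  have n2 : ∀ n, ‖((1 - r (n+2) : ℝ) : ℂ)‖ = 1 - r (n+2) := by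
    intro n
    rw [Complex.norm_real, Real.norm_of_nonneg (by linarith [(hr n).2])]
  refine ⟨fun n => norm_nonneg _, fun n => ?_, fun n => ?_⟩
  · have := norm_sub_le (f (n+1) * f n) ((1 - r (n+2) : ℝ) : ℂ)
    rw [← key, n1, n2, norm_mul] at this
    exact this
  · have h2 := norm_add_le ((r (n+2) : ℂ) * f (n+2)) ((1 - r (n+2) : ℝ) : ℂ)
    rw [n1, n2, key, sub_add_cancel, norm_mul] at h2
    exact h2

lemma exists_delta (p : ℕ → ℝ) (hp : ∀ i, 1 ≤ i → 0 < p i ∧ p i ≤ 1)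
    (hlim : 0 < Filter.liminf p Filter.atTop) : ∃ δ > 0, ∀ i, 1 ≤ i → δ ≤ p i := by
  have hb : IsBoundedUnder (· ≥ ·) atTop p :=
    ⟨0, by
      rw [eventually_map]
      filter_upwards [eventually_ge_atTop 1] with i hi using (hp i hi).1.le⟩
  have h1 := eventually_lt_of_lt_liminf (half_lt_self hlim) hb
  obtain ⟨M, hM⟩ := eventually_atTop.1 h1
  have h2 : ∀ M : ℕ, ∃ δ > 0, ∀ i, 1 ≤ i → i < M → δ ≤ p i := by
    intro M
    induction M with
    | zero => exact ⟨1, one_pos, fun i _ h => by omega⟩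
    | succ M ih =>
      obtain ⟨δ, hδ, h⟩ := ih
      rcases Nat.eq_zero_or_pos M with h0 | h0
      · exact ⟨1, one_pos, fun i _ h => by omega⟩
      · refine ⟨min δ (p M), lt_min hδ (hp M h0).1, fun i hi hi' => ?_⟩
        rcases Nat.lt_succ_iff_lt_or_eq.1 hi' with h3 | h3
        · exact (min_le_left _ _).trans (h i hi h3)
        · rw [h3]; exact min_le_right _ _
  obtain ⟨δ, hδ, h⟩ := h2 M
  refine ⟨min δ (liminf p atTop / 2), lt_min hδ (half_pos hlim), fun i hi => ?_⟩
  rcases lt_or_ge i M with h3 | h3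
  · exact (min_le_left _ _).trans (h i hi h3)
  · exact (min_le_right _ _).trans (hM i h3).le

/-- The polynomials behind `phiSeq`. -/
noncomputable def PhiPoly (p : ℕ → ℝ) (h : ℂ[X]) : ℕ → ℂ[X]
  | 0 => X
  | 1 => h
  | (n+2) => C (1 / (rr p (n+2) : ℂ)) * PhiPoly p h (n+1) * PhiPoly p h n
      - C (1 / (rr p (n+2) : ℂ) - 1)

lemma PhiPoly_eval (p : ℕ → ℝ) (h : ℂ[X]) (z : ℂ) (n : ℕ) :
    (PhiPoly p h n).eval z = phiSeq p h n z := by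
  induction n using Nat.twoStepInduction with
  | zero => simp [PhiPoly, phiSeq]
  | one => simp [PhiPoly, phiSeq]
  | more n h1 h2 => simp only [PhiPoly, phiSeq, eval_sub, eval_mul, eval_C, h1, h2]

lemma PhiPoly_natDegree (p : ℕ → ℝ) (h : ℂ[X]) (hr : ∀ n, 0 < rr p (n+2))
    (hh : 0 < h.natDegree) (n : ℕ) : 0 < (PhiPoly p h n).natDegree := by
  induction n using Nat.twoStepInduction with
  | zero => simp [PhiPoly]
  | one => simpa [PhiPoly] using hh
  | more n h1 h2 =>
    have h0 : (1 / (rr p (n+2) : ℂ)) ≠ 0 := by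
      have : (rr p (n+2) : ℂ) ≠ 0 := by exact_mod_cast (hr n).ne'
      simpa using this
    have a1 : PhiPoly p h n ≠ 0 := by intro e; rw [e] at h1; simp at h1
    have a2 : PhiPoly p h (n+1) ≠ 0 := by intro e; rw [e] at h2; simp at h2
    rw [PhiPoly, natDegree_sub_C, mul_assoc, natDegree_C_mul h0, natDegree_mul a2 a1]
    omega

lemma PhiPoly_deriv (p : ℕ → ℝ) (h : ℂ[X]) (hc0 : h.coeff 0 = 0) (hc1 : h.coeff 1 = 0)
    (n : ℕ) : (PhiPoly p h (n+1)).derivative.eval 0 = 0 := by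
  have e0 : h.eval 0 = 0 := by rw [← coeff_zero_eq_eval_zero, hc0]
  have e1 : h.derivative.eval 0 = 0 := by
    rw [← coeff_zero_eq_eval_zero, coeff_derivative]; simp [hc1]
  induction n using Nat.twoStepInduction with
  | zero => simpa [PhiPoly] using e1
  | one => simp [PhiPoly, e0, e1]
  | more n h1 h2 =>
    rw [PhiPoly]
    simp [h1, h2]

lemma step_meet (p : ℕ → ℝ) (h : ℂ[X]) {δ R : ℝ} (hδ : 0 < δ) (hR : 1 / δ < R)
    (hr : ∀ n, δ ≤ rr p (n+2) ∧ rr p (n+2) ≤ 1)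
    (hh : 0 < h.natDegree)
    (hnest : ∀ n z, R ≤ ‖phiSeq p h (n+2) z‖ → R < ‖phiSeq p h (n+3) z‖)
    (n : ℕ) (V : Set ℂ) (hVo : IsOpen V) (hVne : V.Nonempty)
    (hVW : V ⊆ {z | ‖phiSeq p h (n+2) z‖ < R})
    (hfr : ∀ z ∈ frontier V, R ≤ ‖phiSeq p h (n+2) z‖) :
    (V ∩ {z | ∀ m, ‖phiSeq p h (m+2) z‖ < R}).Nonempty := by
  have hR0 : 0 < R := (by positivity : 0 < 1 / δ).trans hR
  have hcont : ∀ m, Differentiable ℂ (phiSeq p h m) := by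
    intro m
    have : phiSeq p h m = fun z => (PhiPoly p h m).eval z := by
      ext z; rw [PhiPoly_eval]
    rw [this]
    exact (PhiPoly p h m).differentiable
  have hmono : ∀ k m z, R ≤ ‖phiSeq p h (m+2) z‖ → R ≤ ‖phiSeq p h (m+k+2) z‖ := by
    intro k m z hz
    induction k with
    | zero => exact hz
    | succ k ih => exact (hnest _ z ih).le
  have hVb : Bornology.IsBounded V := by
    refine (aux_bdd (PhiPoly p h (n+2))
      (PhiPoly_natDegree p h (fun n => hδ.trans_le (hr n).1) hh _) R).subset ?_
    intro z hz
    have : ‖phiSeq p h (n+2) z‖ < R := hVW hz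
    rw [Set.mem_ofPred_eq, PhiPoly_eval]
    exact this.le
  have hex : ∀ k, ∃ z ∈ V, ‖phiSeq p h (n+k+2) z‖ < R := by
    intro k
    induction k with
    | zero => obtain ⟨z, hz⟩ := hVne; exact ⟨z, hz, hVW hz⟩
    | succ k ih =>
      obtain ⟨z0, hz0, hz0'⟩ := ih
      have hzero : ∃ z ∈ V, phiSeq p h (n+k+2) z = 0 := by
        by_contra hno
        push Not at hno
        have hcl : ∀ z ∈ closure V, phiSeq p h (n+k+2) z ≠ 0 := by
          intro z hz h0
          rw [closure_eq_self_union_frontier] at hz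
          rcases hz with hz | hz
          · exact hno z hz h0
          · have := hmono k n z (hfr z hz)
            rw [h0, norm_zero] at this
            linarith
        have hd : DiffContOnCl ℂ (fun z => (phiSeq p h (n+k+2) z)⁻¹) V :=
          DiffContOnCl.inv (hcont _).diffContOnCl hcl
        have hb := Complex.norm_le_of_forall_mem_frontier_norm_le hVb hd (C := R⁻¹)
          (fun z hz => by
            rw [norm_inv]
            exact inv_anti₀ hR0 (hmono k n z (hfr z hz))) (subset_closure hz0)
        rw [norm_inv] at hb
        have hpos : 0 < ‖phiSeq p h (n+k+2) z0‖ := norm_pos_iff.2 (hno z0 hz0)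
        have := (inv_le_inv₀ hpos hR0).1 hb
        linarith
      obtain ⟨z, hz, h0⟩ := hzero
      refine ⟨z, hz, ?_⟩
      have e : phiSeq p h (n+(k+1)+2) z = -(((1 / rr p (n+k+1+2) - 1 : ℝ)) : ℂ) := by
        have : n+(k+1)+2 = (n+k+1)+2 := by ring
        rw [this, phiSeq]
        have h0' : phiSeq p h (n+k+1+1) z = 0 := h0
        beta_reduce
        rw [h0']
        push_cast
        ring
      obtain ⟨a, b⟩ := hr (n+k+1)
      have hrp : 0 < rr p (n+k+1+2) := hδ.trans_le a
      have h1 : 1 ≤ 1 / rr p (n+k+1+2) := by rw [le_div_iff₀ hrp]; linarith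
      have h2 : 1 / rr p (n+k+1+2) ≤ 1 / δ := one_div_le_one_div_of_le hδ a
      rw [e, norm_neg, Complex.norm_real, Real.norm_of_nonneg (by linarith)]
      linarith
  obtain ⟨z, hz⟩ := IsCompact.nonempty_iInter_of_sequence_nonempty_isCompact_isClosed
    (fun k => closure V ∩ {z | ‖phiSeq p h (n+k+2) z‖ ≤ R})
    (by
      rintro k z ⟨hz1, hz2⟩
      refine ⟨hz1, ?_⟩
      have hz3 : ‖phiSeq p h (n+k+3) z‖ ≤ R := hz2
      show ‖phiSeq p h (n+k+2) z‖ ≤ R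
      by_contra hc
      push Not at hc
      exact absurd (hnest _ z hc.le) (not_lt.2 hz3))
    (fun k => by
      obtain ⟨z, hz, hz'⟩ := hex k
      exact ⟨z, subset_closure hz, hz'.le⟩)
    (hVb.isCompact_closure.inter_right
      (isClosed_le (hcont _).continuous.norm continuous_const))
    (fun k => isClosed_closure.inter
      (isClosed_le (hcont _).continuous.norm continuous_const))
  rw [Set.mem_iInter] at hz
  have hlt : ∀ m, ‖phiSeq p h (m+2) z‖ < R := by
    intro m
    by_contra hc
    push Not at hc
    have h1 := hnest _ z (hmono n m z hc)
    have h2 : ‖phiSeq p h (n+(m+1)+2) z‖ ≤ R := (hz (m+1)).2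
    have e : n+(m+1)+2 = m+n+3 := by ring
    rw [e] at h2
    linarith
  refine ⟨z, ?_, hlt⟩
  have hzc := (hz 0).1
  rw [closure_eq_self_union_frontier] at hzc
  rcases hzc with h1 | h1
  · exact h1
  · exact absurd (hfr z h1) (not_le.2 (hlt n))

lemma zero_escape (p : ℕ → ℝ) (hp : ∀ i, 1 ≤ i → 0 < p i ∧ p i ≤ 1)
    (h : ℂ[X]) (hc0 : h.coeff 0 = 0)
    (hp3 : p 3 < 1/2) (hp2 : p 2 = 1 ∨ (0 < p 2 ∧ p 2 < 1 - p 3)) :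
    1 < ‖phiSeq p h 3 0‖ ∧ 1 < ‖phiSeq p h 4 0‖ := by
  have e0 : h.eval 0 = 0 := by rw [← coeff_zero_eq_eval_zero, hc0]
  have h3 := (hp 3 (by norm_num)).1
  have h2 := (hp 2 (by norm_num)).1
  have f3 : phiSeq p h 3 0 = ((-(1 / p 3 - 1) : ℝ) : ℂ) := by
    simp [phiSeq, e0, rr]
  have f4 : phiSeq p h 4 0 = (((1 / p 3 - 1) * (1 / p 3 * (1 / p 2 - 1) - 1) : ℝ) : ℂ) := by
    simp [phiSeq, e0, rr]
    ring
  have ha : 1 < 1 / p 3 - 1 := by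
    have : 2 < 1 / p 3 := by rw [lt_div_iff₀ h3]; linarith
    linarith
  constructor
  · rw [f3, Complex.norm_real, norm_neg]
    exact ha.trans_le (Real.le_norm_self _)
  · rw [f4, Complex.norm_real]
    rcases hp2 with h1 | ⟨-, h1⟩
    · rw [h1]
      norm_num
      rw [abs_sub_comm]
      refine lt_of_lt_of_le ?_ (le_abs_self _)
      simpa using ha
    · refine lt_of_lt_of_le ?_ (Real.le_norm_self _)
      have e : (1 / p 3 - 1) * (1 / p 3 * (1 / p 2 - 1) - 1)
          = (1 - p 3) * (1 - p 2 - p 2 * p 3) / (p 3 * p 3 * p 2) := by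
        field_simp
      rw [e, lt_div_iff₀ (by positivity)]
      have k1 : p 3 * (1 - p 2) < 1 - p 2 - p 2 * p 3 := by nlinarith
      have k2 : p 2 * p 3 < (1 - p 3) * (1 - p 2) := by nlinarith
      calc 1 * (p 3 * p 3 * p 2) = p 3 * (p 2 * p 3) := by ring
        _ < p 3 * ((1 - p 3) * (1 - p 2)) := by gcongr
        _ = (1 - p 3) * (p 3 * (1 - p 2)) := by ring
        _ < _ := by
          apply mul_lt_mul_of_pos_left k1
          linarith

/-- Let `h(z) = a₂z² + ⋯ + aₙzⁿ` (a nonzero polynomial with zero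
constant and linear coefficients) and suppose `liminf p i > 0`.  If `p 3 < 1/2` and
either `p 2 = 1` or `0 < p 2 < 1 - p 3`, then `F_h` is not connected. -/
theorem stmt17 (p : ℕ → ℝ) (hp : ∀ i, 1 ≤ i → 0 < p i ∧ p i ≤ 1)
    (h : Polynomial ℂ) (hne : h ≠ 0) (hc0 : h.coeff 0 = 0) (hc1 : h.coeff 1 = 0)
    (hlim : 0 < Filter.liminf p Filter.atTop)
    (hp3 : p 3 < 1/2) (hp2 : p 2 = 1 ∨ (0 < p 2 ∧ p 2 < 1 - p 3)) :
    ¬ IsConnected (Fset p h) := by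
  intro hconn
  obtain ⟨δ, hδ, hδp⟩ := exists_delta p hp hlim
  have hr : ∀ n, δ ≤ rr p (n+2) ∧ rr p (n+2) ≤ 1 := fun n =>
    ⟨hδp _ (by omega), (hp _ (by omega)).2⟩
  have hr' : ∀ n, 0 < rr p (n+2) ∧ rr p (n+2) ≤ 1 := fun n =>
    ⟨hδ.trans_le (hr n).1, (hr n).2⟩
  have hh : 0 < h.natDegree := by
    rw [Nat.pos_iff_ne_zero]
    intro h0
    apply hne
    rw [eq_C_of_natDegree_eq_zero h0, hc0, C_0]
  have hrec : ∀ z, NormRec (rr p) (fun n => ‖phiSeq p h n z‖) := fun z =>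
    NormRec.of_rec hr' (fun n => by rw [phiSeq])
  obtain ⟨B1, hB1⟩ := (aux_bdd h hh 1).exists_norm_le
  obtain ⟨B2, hB2⟩ := (isCompact_closedBall (0:ℂ) 1).exists_bound_of_continuousOn
    h.continuous.continuousOn
  set S : ℝ := 2 / δ + |B1| + |B2| + 1 with hS
  have hδ2 : 0 < 2 / δ := by positivity
  have hS2 : 2 ≤ δ * S := by
    have : δ * (2 / δ) = 2 := by field_simp
    have h1 := abs_nonneg B1
    have h2 := abs_nonneg B2
    have : δ * S = 2 + δ * (|B1| + |B2| + 1) := by rw [hS]; linear_combination this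
    rw [this]
    have : 0 < δ * (|B1| + |B2| + 1) := by positivity
    linarith
  have h01 : ∀ z, S ≤ ‖phiSeq p h 0 z‖ → 1 < ‖phiSeq p h 1 z‖ := by
    intro z hz
    by_contra hc
    push Not at hc
    have h1 : ‖z‖ ≤ B1 := hB1 z (by simpa [phiSeq] using hc)
    have h2 : S ≤ ‖z‖ := by simpa [phiSeq] using hz
    linarith [le_abs_self B1, abs_nonneg B2]
  have h12 : ∀ z, ‖phiSeq p h 0 z‖ ≤ 1 → ‖phiSeq p h 1 z‖ < S := by
    intro z hz
    have h1 : ‖h.eval z‖ ≤ B2 := hB2 z (by simpa [phiSeq] using hz)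
    have : ‖phiSeq p h 1 z‖ ≤ B2 := by simpa [phiSeq] using h1
    linarith [le_abs_self B2, abs_nonneg B1]
  set R : ℝ := (S + 1) / δ with hRdef
  have hRS : S + 1 ≤ δ * R := by rw [hRdef]; field_simp; rfl
  have hS0 : 0 < S := by
    have h1 := abs_nonneg B1
    have h2 := abs_nonneg B2
    linarith
  have hRδ : 1 / δ < R := by
    rw [hRdef]
    gcongr
    linarith
  have hR0 : 0 < R := by positivity
  have hδ1 : δ ≤ 1 := (hr 0).1.trans (hr 0).2
  have hR1 : 1 < R := by
    refine lt_of_le_of_lt ?_ hRδ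
    rw [le_div_iff₀ hδ]; linarith
  have hnest : ∀ n z, R ≤ ‖phiSeq p h (n+2) z‖ → R < ‖phiSeq p h (n+3) z‖ := fun n z hz =>
    ((hrec z).nest hδ hr hS2 (h01 z) (h12 z) hRS n hz).2
  have hF : Fset p h = {z | ∀ m, ‖phiSeq p h (m+2) z‖ < R} := by
    ext z
    constructor
    · rintro ⟨B, hB⟩ m
      by_contra hc
      push Not at hc
      have h1 := hnest m z hc
      obtain ⟨k, -, hk⟩ := (hrec z).unbdd hr' (n := m+2) (hR1.trans_le hc) (hR1.trans h1) B
      exact absurd (hB k) (not_le.2 hk)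
    · intro hz
      refine ⟨R + ‖phiSeq p h 0 z‖ + ‖phiSeq p h 1 z‖, fun n => ?_⟩
      have a0 := norm_nonneg (phiSeq p h 0 z)
      have a1 := norm_nonneg (phiSeq p h 1 z)
      match n with
      | 0 => linarith
      | 1 => linarith
      | (n+2) =>
        have : ‖phiSeq p h (n+2) z‖ < R := hz n
        linarith
  obtain ⟨z3, z4⟩ := zero_escape p hp h hc0 hp3 hp2
  obtain ⟨m, hm, hm0⟩ := (hrec 0).unbdd hr' (n := 3) z3 z4 R
  obtain ⟨n, rfl⟩ : ∃ n, m = n + 2 := ⟨m - 2, by omega⟩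
  have hWo : IsOpen {z : ℂ | ‖phiSeq p h (n+2) z‖ < R} := by
    simp_rw [← PhiPoly_eval]
    exact isOpen_lt (by fun_prop) continuous_const
  have hW : IsPreconnected {z : ℂ | ‖phiSeq p h (n+2) z‖ < R} := by
    have side : ∀ u v : Set ℂ, IsOpen u → IsOpen v →
        {z : ℂ | ‖phiSeq p h (n+2) z‖ < R} ⊆ u ∪ v →
        ({z : ℂ | ‖phiSeq p h (n+2) z‖ < R} ∩ u).Nonempty →
        ¬ ({z : ℂ | ‖phiSeq p h (n+2) z‖ < R} ∩ (u ∩ v)).Nonempty →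
        (Fset p h ∩ u).Nonempty := by
      intro u v hu hv huv hne hno
      have hmeet := step_meet p h hδ hRδ hr hh hnest n _ (hWo.inter hu) hne
        Set.inter_subset_left (by
          intro z hz
          by_contra hc
          push Not at hc
          have hzW : z ∈ {z : ℂ | ‖phiSeq p h (n+2) z‖ < R} := hc
          rw [(hWo.inter hu).frontier_eq] at hz
          have hzv : z ∈ v := by
            rcases huv hzW with h1 | h1
            · exact absurd ⟨hzW, h1⟩ hz.2
            · exact h1
          obtain ⟨y, hy1, hy2, hy3⟩ := mem_closure_iff.1 hz.1 v hv hzv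
          exact hno ⟨y, hy2, hy3, hy1⟩)
      obtain ⟨z, hz1, hz2⟩ := hmeet
      exact ⟨z, hF ▸ hz2, hz1.2⟩
    intro u v hu hv huv hneu hnev
    by_contra hno
    have f1 := side u v hu hv huv hneu hno
    have f2 := side v u hv hu (by rwa [Set.union_comm]) hnev (by rwa [Set.inter_comm v u])
    have hsub : Fset p h ⊆ {z : ℂ | ‖phiSeq p h (n+2) z‖ < R} := by
      rw [hF]; intro z hz; exact hz n
    obtain ⟨z, hz1, hz2⟩ := hconn.isPreconnected u v hu hv (hsub.trans huv) f1 f2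
    exact hno ⟨z, hsub hz1, hz2⟩
  refine no_crit (PhiPoly p h (n+2)) (PhiPoly_natDegree p h (fun n => (hr' n).1) hh _) hR0 ?_
    (z0 := 0) ?_ (PhiPoly_deriv p h hc0 hc1 (n+1))
  · simpa only [PhiPoly_eval] using hW
  · rw [PhiPoly_eval]; exact hm0
end

section
/- Let h(z) = a_2 z² + a_3 z³ + … + a_n zⁿ with n ≥ 2 and a_2, …, a_n ∈ ℂ, h not identically zero, and suppose liminf_{i→∞} p_i > 0. If there exists k ≥ 3 such that p_i = 1 for all i ∈ {2, 3, …, k} and p_{k+1} < 1/2, then the set F_h is not connected. -/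
theorem aux_step (r : ℝ) (a b : ℂ) (hr : 0 < r) (hr1 : r ≤ 1) :
    (‖a‖ * ‖b‖ - 1) / r + 1 ≤ ‖(1 / (r : ℂ)) * a * b - (1 / (r : ℂ) - 1)‖ := by
  have h1 : ‖(1 / (r : ℂ)) * a * b‖ = ‖a‖ * ‖b‖ / r := by
    simp [abs_of_pos hr]; field_simp
  have h2 : ‖(1 / (r : ℂ) - 1)‖ = 1 / r - 1 := by
    have : (1 / (r : ℂ) - 1) = ((1 / r - 1 : ℝ) : ℂ) := by push_cast; rfl
    rw [this, Complex.norm_real, Real.norm_eq_abs, abs_of_nonneg]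
    have : 1 ≤ 1 / r := by rw [le_div_iff₀ hr]; linarith
    linarith
  have := norm_sub_norm_le ((1 / (r : ℂ)) * a * b) (1 / (r : ℂ) - 1)
  rw [h1, h2] at this
  calc _ = ‖a‖ * ‖b‖ / r - (1 / r - 1) := by ring
    _ ≤ _ := this

theorem aux_step_up (r : ℝ) (a b : ℂ) (hr : 0 < r) (hr1 : r ≤ 1) :
    ‖(1 / (r : ℂ)) * a * b - (1 / (r : ℂ) - 1)‖ ≤ (‖a‖ * ‖b‖ + 1) / r - 1 := by
  have h1 : ‖(1 / (r : ℂ)) * a * b‖ = ‖a‖ * ‖b‖ / r := by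
    simp [abs_of_pos hr]; field_simp
  have h2 : ‖(1 / (r : ℂ) - 1)‖ = 1 / r - 1 := by
    have : (1 / (r : ℂ) - 1) = ((1 / r - 1 : ℝ) : ℂ) := by push_cast; rfl
    rw [this, Complex.norm_real, Real.norm_eq_abs, abs_of_nonneg]
    have : 1 ≤ 1 / r := by rw [le_div_iff₀ hr]; linarith
    linarith
  have := norm_sub_le ((1 / (r : ℂ)) * a * b) (1 / (r : ℂ) - 1)
  rw [h1, h2] at this
  calc _ ≤ ‖a‖ * ‖b‖ / r + (1 / r - 1) := this
    _ = _ := by ring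

/-- the recursion -/
def IsRec (δ : ℝ) (r : ℕ → ℝ) (x : ℕ → ℂ) : Prop :=
  (∀ n, δ ≤ r n ∧ r n ≤ 1) ∧
  ∀ n, x (n+2) = (1 / (r (n+2) : ℂ)) * x (n+1) * x n - (1 / (r (n+2) : ℂ) - 1)

theorem IsRec.low {δ r x} (hδ : 0 < δ) (H : IsRec δ r x) (n : ℕ) :
    ‖x (n+1)‖ * ‖x n‖ ≤ max 1 ‖x (n+2)‖ ∧
    (1 < ‖x n‖ → 1 < ‖x (n+1)‖ → ‖x (n+1)‖ * ‖x n‖ ≤ ‖x (n+2)‖) := by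
  have hr := lt_of_lt_of_le hδ (H.1 (n+2)).1
  have h := aux_step (r (n+2)) (x (n+1)) (x n) hr (H.1 _).2
  rw [← H.2] at h
  have key : 1 ≤ ‖x (n+1)‖ * ‖x n‖ → ‖x (n+1)‖ * ‖x n‖ ≤ ‖x (n+2)‖ := by
    intro h1
    have : (‖x (n+1)‖ * ‖x n‖ - 1) ≤ (‖x (n+1)‖ * ‖x n‖ - 1) / r (n+2) := by
      rw [le_div_iff₀ hr]
      nlinarith [(H.1 (n+2)).2]
    linarith
  refine ⟨?_, fun h1 h2 => key (by nlinarith)⟩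
  rcases le_total 1 (‖x (n+1)‖ * ‖x n‖) with h1 | h1
  · exact (key h1).trans (le_max_right _ _)
  · exact h1.trans (le_max_left _ _)

theorem IsRec.up {δ r x} (hδ : 0 < δ) (H : IsRec δ r x) (n : ℕ) :
    ‖x (n+2)‖ ≤ (‖x (n+1)‖ * ‖x n‖ + 1) / δ := by
  have hr := lt_of_lt_of_le hδ (H.1 (n+2)).1
  have h := aux_step_up (r (n+2)) (x (n+1)) (x n) hr (H.1 _).2
  rw [← H.2] at h
  have : (‖x (n+1)‖ * ‖x n‖ + 1) / r (n+2) ≤ (‖x (n+1)‖ * ‖x n‖ + 1) / δ := by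
    have := (H.1 (n+2)).1
    gcongr
  linarith

theorem IsRec.esc {δ r x} (hδ : 0 < δ) (H : IsRec δ r x) (n : ℕ)
    (h0 : 1 < ‖x n‖) (h1 : 1 < ‖x (n+1)‖) :
    ∃ q : ℝ, 1 < q ∧ ∀ j, q ≤ ‖x (n+j)‖ ∧ q ≤ ‖x (n+j+1)‖ ∧ q ^ j ≤ ‖x (n+j+1)‖ := by
  refine ⟨min ‖x n‖ ‖x (n+1)‖, lt_min h0 h1, ?_⟩
  set q := min ‖x n‖ ‖x (n+1)‖ with hq
  have hq1 : 1 < q := lt_min h0 h1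
  intro j
  induction j with
  | zero => exact ⟨min_le_left _ _, min_le_right _ _, by simpa using h1.le⟩
  | succ j ih =>
    obtain ⟨a, b, c⟩ := ih
    have := (H.low hδ (n+j)).2 (by linarith) (by linarith)
    refine ⟨b, ?_, ?_⟩
    · change q ≤ ‖x (n+j+2)‖
      nlinarith
    · change q ^ (j+1) ≤ ‖x (n+j+2)‖
      rw [pow_succ]
      refine le_trans ?_ this
      gcongr

theorem IsRec.large {δ r x} (hδ : 0 < δ) (H : IsRec δ r x) (n : ℕ)
    (h0 : 1 < ‖x n‖) (h1 : 1 < ‖x (n+1)‖) (B : ℝ) :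
    ∃ N, ∀ j, N ≤ j → B < ‖x j‖ := by
  obtain ⟨q, hq, h⟩ := H.esc hδ n h0 h1
  obtain ⟨m, hm⟩ := pow_unbounded_of_one_lt B hq
  refine ⟨n+m+1, fun j hj => ?_⟩
  obtain ⟨i, rfl⟩ := Nat.exists_eq_add_of_le hj
  have := (h (m+i)).2.2
  rw [show n+m+1+i = n+(m+i)+1 by ring]
  have h3 : q^m ≤ q^(m+i) := pow_le_pow_right₀ hq.le (by omega)
  linarith

theorem IsRec.mono {δ r x} (hδ : 0 < δ) (H : IsRec δ r x) (n : ℕ)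
    (h0 : 1 < ‖x n‖) (h1 : 1 < ‖x (n+1)‖) (j : ℕ) (hj : n ≤ j) :
    1 < ‖x j‖ := by
  obtain ⟨q, hq, h⟩ := H.esc hδ n h0 h1
  obtain ⟨i, rfl⟩ := Nat.exists_eq_add_of_le hj
  exact hq.trans_le (h i).1

theorem IsRec.bdd {δ : ℝ} (hδ : 0 < δ) (A : ℝ) : ∃ R : ℝ, 1 ≤ R ∧ ∀ r x, IsRec δ r x →
    (∀ n, n < 4 → ‖x n‖ ≤ A) → (∀ n, ‖x n‖ ≤ 1 ∨ ‖x (n+1)‖ ≤ 1) → ∀ n, ‖x n‖ ≤ R := by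
  set y0 := (2/δ+1)/δ with hy0
  have hy0p : 0 < y0 := by positivity
  refine ⟨max (max A 1) (max (2/δ*(1+1)) (2*y0/δ)), by simp, ?_⟩
  intro r x H hA hne n
  set R := max (max A 1) (max (2/δ*(1+1)) (2*y0/δ)) with hR
  have hRA : A ≤ R := by simp [hR]
  have hR1 : 1 ≤ R := by simp [hR]
  have hR2 : 2/δ*(1+1) ≤ R := by simp [hR]
  have hR3 : 2*y0/δ ≤ R := by simp [hR]
  induction n using Nat.strong_induction_on with
  | _ n ih =>
  by_cases hn : n < 4
  · exact (hA n hn).trans hRA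
  push Not at hn
  obtain ⟨m, rfl⟩ := Nat.exists_eq_add_of_le' hn
  by_contra! hM
  have a3 : ‖x (m+3)‖ ≤ 1 := by
    rcases hne (m+3) with h | h
    · exact h
    · change ‖x (m+4)‖ ≤ 1 at h
      linarith
  have u4 : ‖x (m+4)‖ ≤ (‖x (m+3)‖ * ‖x (m+2)‖ + 1) / δ := H.up hδ (m+2)
  have u2 : ‖x (m+2)‖ ≤ (‖x (m+1)‖ * ‖x m‖ + 1) / δ := H.up hδ m
  have l3 : ‖x (m+2)‖ * ‖x (m+1)‖ ≤ 1 := by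
    have := (H.low hδ (m+1)).1
    change ‖x (m+2)‖ * ‖x (m+1)‖ ≤ max 1 ‖x (m+3)‖ at this
    rwa [max_eq_left a3] at this
  have i0 := ih m (by omega)
  rw [le_div_iff₀ hδ] at u4 u2
  set M := ‖x (m+4)‖
  set y := ‖x (m+2)‖
  have hδM : 4 ≤ M * δ := by
    have : 2/δ*(1+1) ≤ M := by linarith
    have := mul_le_mul_of_nonneg_right this hδ.le
    field_simp at this
    linarith
  have hMy0 : 2 * y0 ≤ M * δ := by
    have : 2*y0/δ ≤ M := by linarith
    rwa [div_le_iff₀ hδ] at this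
  have hy : M * δ - 1 ≤ y := by nlinarith [norm_nonneg (x (m+2))]
  have hyh : M * δ / 2 ≤ y := by linarith
  have hyy : y0 ≤ y := by linarith
  have hyd : 2/δ ≤ y * δ - 1 := by
    rw [hy0, div_le_iff₀ hδ] at hyy
    linarith
  -- x m ≥ (yδ - 1) y
  have hb : (y * δ - 1) * y ≤ ‖x m‖ := by
    have : (y * δ - 1) * y ≤ (‖x (m+1)‖ * ‖x m‖) * y := by
      have : 0 ≤ y := norm_nonneg _
      gcongr
      linarith
    nlinarith [norm_nonneg (x m)]
  have hc : M ≤ (y * δ - 1) * y := by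
    calc M = 2/δ * (M * δ/2) := by field_simp
      _ ≤ _ := by
        have : 0 < 2/δ := by positivity
        gcongr <;> linarith
  linarith

theorem ext_disc_conn (T : ℝ) (hT : 0 < T) (d : ℕ) (hd : 0 < d) :
    IsPreconnected {u : ℂ | T < ‖u‖ ^ d} := by
  have hd' : (0:ℝ) < d := by exact_mod_cast hd
  have key : ∀ w : ℂ, T < ‖Complex.exp w‖ ^ d ↔ Real.log T / d < w.re := by
    intro w
    rw [Complex.norm_exp, ← Real.exp_nat_mul, ← Real.log_lt_iff_lt_exp hT, div_lt_iff₀ hd', mul_comm]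
  have : {u : ℂ | T < ‖u‖ ^ d} = Complex.exp '' {w | Real.log T / d < w.re} := by
    ext u
    constructor
    · intro hu
      have hu0 : u ≠ 0 := by
        rintro rfl
        simp [hd.ne'] at hu
        linarith
      refine ⟨Complex.log u, ?_, Complex.exp_log hu0⟩
      rw [Set.mem_ofPred_eq, ← key, Complex.exp_log hu0]
      exact hu
    · rintro ⟨w, hw, rfl⟩
      exact (key w).2 hw
  rw [this]
  exact (convex_halfSpace_re_gt _).isPreconnected.image _ Complex.continuous_exp.continuousOn

theorem log_exists (X V : Set ℂ) (hX : IsOpen X) (hXc : IsPreconnected X)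
    (hXV : ∀ z ∈ V, z ∉ X) {a b : ℂ} (ha : a ∈ X) (hb : b ∈ X) :
    ∃ L : ℂ → ℂ, DifferentiableOn ℂ L V ∧ ∀ z ∈ V, z - b = (z - a) * Complex.exp (L z) := by
  refine hXc.induction₂ (fun a b => ∃ L : ℂ → ℂ, DifferentiableOn ℂ L V ∧
    ∀ z ∈ V, z - b = (z - a) * Complex.exp (L z)) ?_ ?_ ?_ ha hb
  · intro x hx
    apply mem_nhdsWithin_of_mem_nhds
    obtain ⟨ε, hε, hb⟩ := Metric.isOpen_iff.1 hX x hx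
    filter_upwards [Metric.ball_mem_nhds x hε] with y hy
    have hV : ∀ z ∈ V, z - x ≠ 0 ∧ ‖(x - y) / (z - x)‖ < 1 := by
      intro z hz
      have h1 : ε ≤ ‖z - x‖ := by
        by_contra! h
        exact hXV z hz (hb (by simpa [dist_eq_norm] using h))
      have h2 : ‖x - y‖ < ε := by
        rw [norm_sub_rev]; simpa [dist_eq_norm] using hy
      have h3 : 0 < ‖z - x‖ := by linarith
      refine ⟨norm_pos_iff.1 h3, ?_⟩
      rw [norm_div, div_lt_one h3]
      linarith
    refine ⟨fun z => Complex.log (1 + (x - y) / (z - x)), ?_, ?_⟩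
    · intro z hz
      have := hV z hz
      refine DifferentiableWithinAt.clog ?_ (Complex.mem_slitPlane_of_norm_lt_one this.2)
      refine DifferentiableWithinAt.const_add _ ?_
      exact (differentiableWithinAt_const _).div (by fun_prop) this.1
    · intro z hz
      have := hV z hz
      simp only
      rw [Complex.exp_log (Complex.slitPlane_ne_zero (Complex.mem_slitPlane_of_norm_lt_one this.2))]
      have h := this.1
      field_simp
      ring
  · rintro x y z - - - ⟨L, hL, h⟩ ⟨M, hM, h'⟩
    refine ⟨fun w => L w + M w, hL.add hM, fun w hw => ?_⟩
    rw [h' w hw, h w hw, Complex.exp_add, mul_assoc]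
  · rintro x y - - ⟨L, hL, h⟩
    refine ⟨fun w => - L w, hL.neg, fun w hw => ?_⟩
    rw [h w hw, mul_assoc, ← Complex.exp_add]
    simp

theorem root_exists (P : Polynomial ℂ) (hd : 0 < P.natDegree) (X V : Set ℂ) (hX : IsOpen X)
    (hXc : IsPreconnected X) (hXV : ∀ z ∈ V, z ∉ X) (hroots : ∀ z, P.eval z = 0 → z ∈ X) :
    ∃ g : ℂ → ℂ, DifferentiableOn ℂ g V ∧ ∀ z ∈ V, g z ^ P.natDegree = P.eval z := by
  have hP0 : P ≠ 0 := by rintro rfl; simp at hd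
  obtain ⟨a, ha⟩ := Complex.exists_root (f := P) (Polynomial.natDegree_pos_iff_degree_pos.1 hd)
  have haX := hroots a ha
  have hL : ∀ b : ℂ, ∃ L : ℂ → ℂ, b ∈ X → DifferentiableOn ℂ L V ∧
      ∀ z ∈ V, z - b = (z - a) * Complex.exp (L z) := by
    intro b
    by_cases hb : b ∈ X
    · obtain ⟨L, h⟩ := log_exists X V hX hXc hXV haX hb
      exact ⟨L, fun _ => h⟩
    · exact ⟨0, fun h => absurd h hb⟩
  choose L hL using hL
  have hprod : ∀ S : Multiset ℂ, (∀ b ∈ S, b ∈ X) →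
      DifferentiableOn ℂ (fun z => (S.map (fun b => L b z)).sum) V ∧
      ∀ z ∈ V, (S.map (fun b => z - b)).prod =
        (z - a) ^ (Multiset.card S) * Complex.exp ((S.map (fun b => L b z)).sum) := by
    intro S
    induction S using Multiset.induction_on with
    | empty => intro _; simp
    | cons b S ih =>
      intro h
      obtain ⟨i1, i2⟩ := ih (fun c hc => h c (Multiset.mem_cons_of_mem hc))
      obtain ⟨l1, l2⟩ := hL b (h b (Multiset.mem_cons_self _ _))
      constructor
      · simp only [Multiset.map_cons, Multiset.sum_cons]
        exact l1.add i1
      · intro z hz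
        simp only [Multiset.map_cons, Multiset.sum_cons, Multiset.prod_cons, Multiset.card_cons]
        rw [i2 z hz, l2 z hz, Complex.exp_add]
        ring
  obtain ⟨d1, d2⟩ := hprod P.roots (fun b hb => hroots b ((Polynomial.mem_roots hP0).1 hb))
  obtain ⟨c, hc⟩ := IsAlgClosed.exists_pow_nat_eq P.leadingCoeff hd
  have hsp := IsAlgClosed.splits P
  refine ⟨fun z => c * ((z - a) * Complex.exp ((P.roots.map (fun b => L b z)).sum / P.natDegree)),
    ?_, ?_⟩
  · refine DifferentiableOn.const_mul ?_ _
    refine DifferentiableOn.mul (by fun_prop) ?_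
    exact (d1.div_const _).cexp
  · intro z hz
    simp only
    rw [hsp.eval_eq_prod_roots, d2 z hz, mul_pow, hc, mul_pow, ← Complex.exp_nat_mul,
      ← hsp.natDegree_eq_card_roots]
    congr 3
    have : (P.natDegree : ℂ) ≠ 0 := by exact_mod_cast hd.ne'
    field_simp

theorem key_lemma (P : Polynomial ℂ) (hd : 0 < P.natDegree) (X : Set ℂ) (hX : IsOpen X)
    (hXc : IsPreconnected X) (hroots : ∀ z, P.eval z = 0 → z ∈ X) (T : ℝ) (hT : 0 < T)
    (hXT : ∀ z ∈ X, ‖P.eval z‖ ≤ T) (z : ℂ) (hz : T < ‖P.eval z‖) :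
    P.derivative.eval z ≠ 0 := by
  set V : Set ℂ := {z | T < ‖P.eval z‖} with hV
  have hVo : IsOpen V := isOpen_lt continuous_const (by fun_prop)
  obtain ⟨g, hgd, hg⟩ := root_exists P hd X V hX hXc
    (fun z hz hzX => absurd (hXT z hzX) (not_le.2 hz)) hroots
  set d := P.natDegree with hdd
  have hconst : ∀ w : ℂ, P - Polynomial.C w ≠ 0 := by
    intro w h
    rw [sub_eq_zero] at h
    rw [hdd, h] at hd
    simp at hd
  -- surjectivity
  have hopen : IsOpen (g '' V) := by
    rw [isOpen_iff_mem_nhds]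
    rintro _ ⟨v, hv, rfl⟩
    have hVn := hVo.mem_nhds hv
    rcases (hgd.analyticAt hVn).eventually_constant_or_nhds_le_map_nhds with h | h
    · exfalso
      have h2 : ∀ᶠ y in nhds v, (P - Polynomial.C (P.eval v)).eval y = 0 := by
        filter_upwards [h, hVn] with y hy hyV
        have := hg y hyV
        rw [hy, hg v hv] at this
        simp [this]
      have h3 : Set.Finite {y | (P - Polynomial.C (P.eval v)).IsRoot y} :=
        Polynomial.finite_setOfPred_isRoot (hconst _)
      have h4 : {y | (P - Polynomial.C (P.eval v)).IsRoot y} ∈ nhds v := h2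
      exact (infinite_of_mem_nhds v h4) h3
    · exact h (Filter.image_mem_map hVn)
  have hne : ({u : ℂ | T < ‖u‖ ^ d} ∩ g '' V).Nonempty := by
    refine ⟨g z, ?_, z, hz, rfl⟩
    rw [Set.mem_ofPred_eq, ← norm_pow, hg z hz]
    exact hz
  have hsurj : {u : ℂ | T < ‖u‖ ^ d} ⊆ g '' V := by
    refine (ext_disc_conn T hT d hd).subset_of_closure_inter_subset hopen hne ?_
    rintro u ⟨hu, huT⟩
    rw [Set.mem_ofPred_eq, ← norm_pow] at huT
    obtain ⟨ε, hε, hεT⟩ : ∃ ε > 0, T < ‖u ^ d‖ - ε :=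
      ⟨(‖u ^ d‖ - T) / 2, by linarith, by linarith⟩
    set K : Set ℂ := {y | ‖P.eval y - u ^ d‖ ≤ ε} with hK
    have hKV : K ⊆ V := by
      intro y hy
      have h1 : ‖P.eval y - u ^ d‖ ≤ ε := hy
      have h2 := norm_sub_norm_le (u ^ d) (P.eval y)
      rw [norm_sub_rev] at h2
      change T < ‖P.eval y‖
      linarith
    have hKc : IsCompact K := by
      refine Metric.isCompact_of_isClosed_isBounded (isClosed_le (by fun_prop) continuous_const) ?_
      have ht : Filter.Tendsto (fun x => ‖P.eval x‖) (Bornology.cobounded ℂ) Filter.atTop :=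
        P.tendsto_norm_atTop (Polynomial.natDegree_pos_iff_degree_pos.1 hd) tendsto_norm_cobounded_atTop
      have := ht.eventually_gt_atTop (‖u ^ d‖ + ε)
      rw [Bornology.isBounded_def]
      filter_upwards [this] with y hy hyK
      have h1 : ‖P.eval y - u ^ d‖ ≤ ε := hyK
      have h2 := norm_sub_norm_le (P.eval y) (u ^ d)
      linarith
    have hcl : IsClosed (g '' K) := (hKc.image_of_continuousOn (hgd.continuousOn.mono hKV)).isClosed
    have : u ∈ closure (g '' K) := by
      have hO : IsOpen {w : ℂ | ‖w ^ d - u ^ d‖ < ε} := isOpen_lt (by fun_prop) continuous_const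
      have hu' : u ∈ {w : ℂ | ‖w ^ d - u ^ d‖ < ε} := by simpa using hε
      refine closure_mono ?_ (hO.inter_closure ⟨hu', hu⟩)
      rintro _ ⟨h1, v, hv, rfl⟩
      refine ⟨v, ?_, rfl⟩
      rw [Set.mem_ofPred_eq, hg v hv] at h1
      exact h1.le
    rw [hcl.closure_eq] at this
    exact Set.image_mono hKV this
  -- counting
  intro hder
  set w := P.eval z with hw
  have hw0 : w ≠ 0 := by
    intro h
    rw [h, norm_zero] at hz
    linarith
  set Q := P - Polynomial.C w with hQ
  have hprim := Complex.isPrimitiveRoot_exp d hd.ne'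
  have hcard : (Polynomial.nthRoots d w).toFinset.card = d := by
    rw [Multiset.toFinset_card_of_nodup (hprim.nthRoots_nodup hw0), hprim.card_nthRoots,
      if_pos (IsAlgClosed.exists_pow_nat_eq w hd)]
  have hsub : (Polynomial.nthRoots d w).toFinset ⊆ Q.roots.toFinset.image g := by
    intro u hu
    rw [Multiset.mem_toFinset, Polynomial.mem_nthRoots hd] at hu
    have : u ∈ {u : ℂ | T < ‖u‖ ^ d} := by
      rw [Set.mem_ofPred_eq, ← norm_pow, hu]; exact hz
    obtain ⟨v, hv, rfl⟩ := hsurj this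
    refine Finset.mem_image_of_mem _ ?_
    rw [Multiset.mem_toFinset, Polynomial.mem_roots (hconst w)]
    rw [hg v hv] at hu
    simp [hu]
  have h1 : d ≤ Q.roots.toFinset.card := by
    calc d = _ := hcard.symm
      _ ≤ _ := Finset.card_le_card hsub
      _ ≤ _ := Finset.card_image_le
  have h2 : Multiset.card Q.roots ≤ d := by
    refine (Polynomial.card_roots' Q).trans ?_
    rw [hQ, Polynomial.natDegree_sub_C]
  have hnd : Q.roots.Nodup := by
    rw [← Multiset.toFinset_card_eq_card_iff_nodup]
    exact le_antisymm (Multiset.toFinset_card_le _) (h2.trans h1)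
  have h3 : 1 < Q.rootMultiplicity z := by
    rw [Polynomial.one_lt_rootMultiplicity_iff_isRoot (hconst w)]
    constructor
    · simp [hQ, hw]
    · simpa [hQ] using hder
  rw [← Polynomial.count_roots] at h3
  exact absurd (Multiset.nodup_iff_count_le_one.1 hnd z) (not_le.2 h3)

/-- polynomial version of `phiSeq` -/
noncomputable def phiPoly (p : ℕ → ℝ) (h : Polynomial ℂ) : ℕ → Polynomial ℂ
  | 0 => Polynomial.X
  | 1 => h
  | (n+2) => Polynomial.C (1 / (rr p (n+2) : ℂ)) * phiPoly p h (n+1) * phiPoly p h n -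
      Polynomial.C (1 / (rr p (n+2) : ℂ) - 1)

theorem phiSeq_two (p : ℕ → ℝ) (h : Polynomial ℂ) (n : ℕ) (z : ℂ) :
    phiSeq p h (n+2) z = (1 / (rr p (n+2) : ℂ)) * phiSeq p h (n+1) z * phiSeq p h n z -
      (1 / (rr p (n+2) : ℂ) - 1) := rfl

theorem phiPoly_eval (p : ℕ → ℝ) (h : Polynomial ℂ) (z : ℂ) (n : ℕ) :
    (phiPoly p h n).eval z = phiSeq p h n z := by
  induction n using Nat.twoStepInduction with
  | zero => simp [phiPoly, phiSeq]
  | one => simp [phiPoly, phiSeq]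
  | more n h1 h2 =>
    rw [phiPoly, phiSeq_two, ← h1, ← h2]
    simp only [Polynomial.eval_sub, Polynomial.eval_mul, Polynomial.eval_C]

theorem phiPoly_deg (p : ℕ → ℝ) (h : Polynomial ℂ) (hh : 0 < h.natDegree)
    (hr : ∀ n, rr p n ≠ 0) (n : ℕ) :
    0 < (phiPoly p h n).natDegree := by
  induction n using Nat.twoStepInduction with
  | zero => simp [phiPoly]
  | one => simpa [phiPoly] using hh
  | more n h1 h2 =>
    have hc : (1 / (rr p (n+2) : ℂ)) ≠ 0 := by
      simpa using hr (n+2)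
    rw [phiPoly, Polynomial.natDegree_sub_C, mul_assoc, Polynomial.natDegree_C_mul hc,
      Polynomial.natDegree_mul]
    · omega
    · intro h; simp [h] at h2
    · intro h; simp [h] at h1

theorem phiPoly_der (p : ℕ → ℝ) (h : Polynomial ℂ) (hc0 : h.coeff 0 = 0) (hc1 : h.coeff 1 = 0)
    (n : ℕ) : (phiPoly p h (n+1)).derivative.eval 0 = 0 := by
  have e0 : h.eval 0 = 0 := by rw [← Polynomial.coeff_zero_eq_eval_zero, hc0]
  have e1 : h.derivative.eval 0 = 0 := by
    rw [← Polynomial.coeff_zero_eq_eval_zero, Polynomial.coeff_derivative]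
    simp [hc1]
  induction n using Nat.twoStepInduction with
  | zero => simpa [phiPoly] using e1
  | one => simp [phiPoly, e0]
  | more n h1 h2 =>
    rw [phiPoly]
    simp only [Polynomial.derivative_sub, Polynomial.derivative_mul, Polynomial.derivative_C,
      Polynomial.eval_sub, Polynomial.eval_add, Polynomial.eval_mul, h1, h2]
    simp

theorem phi_cont (p : ℕ → ℝ) (h : Polynomial ℂ) (n : ℕ) : Continuous (phiSeq p h n) := by
  have : phiSeq p h n = fun z => (phiPoly p h n).eval z := by
    funext z; rw [phiPoly_eval]
  rw [this]
  fun_prop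

theorem delta_exists (p : ℕ → ℝ) (hp : ∀ i, 1 ≤ i → 0 < p i ∧ p i ≤ 1)
    (hlim : 0 < Filter.liminf p Filter.atTop) : ∃ δ, 0 < δ ∧ ∀ i, 1 ≤ i → δ ≤ p i := by
  have hb : Filter.IsBoundedUnder (· ≥ ·) Filter.atTop p := by
    refine ⟨0, ?_⟩
    rw [Filter.eventually_map]
    filter_upwards [Filter.eventually_ge_atTop 1] with i hi
    exact (hp i hi).1.le
  have := Filter.eventually_lt_of_lt_liminf (half_lt_self hlim) hb
  obtain ⟨N, hN⟩ := Filter.eventually_atTop.1 this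
  have hfin : ∀ M : ℕ, ∃ δ, 0 < δ ∧ ∀ i, 1 ≤ i → i < M → δ ≤ p i := by
    intro M
    induction M with
    | zero => exact ⟨1, one_pos, fun i _ h => absurd h (by omega)⟩
    | succ M ih =>
      obtain ⟨δ, h0, h⟩ := ih
      by_cases hM : 1 ≤ M
      · refine ⟨min δ (p M), lt_min h0 (hp M hM).1, fun i h1 h2 => ?_⟩
        rcases Nat.lt_succ_iff_lt_or_eq.1 h2 with h3 | rfl
        · exact (min_le_left _ _).trans (h i h1 h3)
        · exact min_le_right _ _
      · exact ⟨1, one_pos, fun i h1 h2 => absurd h1 (by omega)⟩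
  obtain ⟨δ, h0, h⟩ := hfin N
  refine ⟨min δ (Filter.liminf p Filter.atTop / 2), lt_min h0 (half_pos hlim), fun i hi => ?_⟩
  by_cases hiN : i < N
  · exact (min_le_left _ _).trans (h i hi hiN)
  · exact (min_le_right _ _).trans (hN i (not_lt.1 hiN)).le

/-- auxiliary upper bounds -/
noncomputable def tb (κ B : ℝ) : ℕ → ℝ
  | 0 => B
  | 1 => B
  | (n+2) => κ * (tb κ B (n+1) * tb κ B n)

theorem tb_ge (κ B : ℝ) (hκ : 1 ≤ κ) (hB : 1 ≤ B) (n : ℕ) : 1 ≤ tb κ B n := by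
  induction n using Nat.twoStepInduction with
  | zero => exact hB
  | one => exact hB
  | more n h1 h2 =>
    rw [tb]
    have : 1 ≤ tb κ B (n+1) * tb κ B n := by nlinarith
    nlinarith

theorem tb_up {δ r x} (hδ : 0 < δ) (hδ1 : δ ≤ 1) (H : IsRec δ r x) (N : ℕ) (B : ℝ) (hB : 1 ≤ B)
    (h0 : ‖x N‖ ≤ B) (h1 : ‖x (N+1)‖ ≤ B) (n : ℕ) : ‖x (N+n)‖ ≤ tb (2/δ) B n := by
  have hκ : 1 ≤ 2/δ := by rw [le_div_iff₀ hδ]; linarith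
  induction n using Nat.twoStepInduction with
  | zero => exact h0
  | one => exact h1
  | more n i1 i2 =>
    have := H.up hδ (N+n)
    change ‖x (N+n+2)‖ ≤ _
    refine this.trans ?_
    rw [tb]
    have t1 := tb_ge (2/δ) B hκ hB n
    have t2 := tb_ge (2/δ) B hκ hB (n+1)
    have hm : ‖x (N+n+1)‖ * ‖x (N+n)‖ ≤ tb (2/δ) B (n+1) * tb (2/δ) B n := by
      gcongr
      exact i2
    rw [div_mul_eq_mul_div]
    gcongr
    nlinarith

theorem tb_low {δ r x} (hδ : 0 < δ) (hδ1 : δ ≤ 1) (H : IsRec δ r x) (N : ℕ) (B : ℝ) (hB : 1 ≤ B)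
    (h0 : 2/δ*B < ‖x N‖) (h1 : 2/δ*B < ‖x (N+1)‖) (n : ℕ) :
    2/δ * tb (2/δ) B n < ‖x (N+n)‖ := by
  have hκ : 1 ≤ 2/δ := by rw [le_div_iff₀ hδ]; linarith
  induction n using Nat.twoStepInduction with
  | zero => exact h0
  | one => exact h1
  | more n i1 i2 =>
    have t1 := tb_ge (2/δ) B hκ hB n
    have t2 := tb_ge (2/δ) B hκ hB (n+1)
    have := (H.low hδ (N+n)).2 (by nlinarith) (by
      change 1 < ‖x (N+(n+1))‖
      nlinarith)
    change _ < ‖x (N+n+2)‖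
    refine lt_of_lt_of_le ?_ this
    rw [tb]
    have i2' : 2/δ * tb (2/δ) B (n+1) < ‖x (N+n+1)‖ := i2
    calc _ = (2/δ * tb (2/δ) B (n+1)) * (2/δ * tb (2/δ) B n) := by ring
      _ < _ := by
        have : 0 < 2/δ := by positivity
        have : 0 < tb (2/δ) B n := by linarith
        have : 0 < tb (2/δ) B (n+1) := by linarith
        gcongr

theorem stmt18 (p : ℕ → ℝ) (hp : ∀ i, 1 ≤ i → 0 < p i ∧ p i ≤ 1)
    (h : Polynomial ℂ) (hne : h ≠ 0) (hc0 : h.coeff 0 = 0) (hc1 : h.coeff 1 = 0)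
    (hlim : 0 < Filter.liminf p Filter.atTop)
    (k : ℕ) (hk : 3 ≤ k) (hone : ∀ i, 2 ≤ i → i ≤ k → p i = 1)
    (hk1 : p (k+1) < 1/2) :
    ¬ IsConnected (Fset p h) := by
  intro hconn
  obtain ⟨δ, hδ, hδp⟩ := delta_exists p hp hlim
  have hδ1 : δ ≤ 1 := (hδp 1 le_rfl).trans (hp 1 le_rfl).2
  have hrec : ∀ z, IsRec δ (rr p) (fun n => phiSeq p h n z) := fun z =>
    ⟨fun n => ⟨hδp _ (by omega), (hp _ (by omega)).2⟩, fun n => rfl⟩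
  have hrne : ∀ n, rr p n ≠ 0 := fun n => (hp _ (by omega)).1.ne'
  have hdeg : 0 < h.natDegree := by
    rw [Nat.pos_iff_ne_zero]
    intro h0
    rw [Polynomial.natDegree_eq_zero] at h0
    obtain ⟨c, rfl⟩ := h0
    simp at hc0
    simp [hc0] at hne
  -- escaping of `0`
  have hz0 : ∀ n, n ≤ 2*k-2 → phiSeq p h n 0 = 0 := by
    intro n
    induction n using Nat.twoStepInduction with
    | zero => intro _; rfl
    | one =>
      intro _
      change h.eval 0 = 0
      rw [← Polynomial.coeff_zero_eq_eval_zero, hc0]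
    | more n h1 h2 =>
      intro hn
      rw [phiSeq_two, h2 (by omega)]
      have : rr p (n+2) = 1 := hone _ (by omega) (by omega)
      simp [this]
  obtain ⟨m, rfl⟩ : ∃ m, k = m + 3 := ⟨k-3, by omega⟩
  have hpk := hp (m+3+1) (by omega)
  set q := p (m+3+1) with hq
  have hcn : 1 < ‖(-(1/(q:ℂ) - 1))‖ := by
    have : (-(1/(q:ℂ) - 1)) = ((-(1/q - 1) : ℝ) : ℂ) := by push_cast; rfl
    rw [this, Complex.norm_real, Real.norm_eq_abs, abs_neg]
    refine lt_of_lt_of_le ?_ (le_abs_self _)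
    have : 2 < 1/q := by rw [lt_div_iff₀ hpk.1]; linarith
    linarith
  have e5 : phiSeq p h (2*m+5) 0 = -(1/(q:ℂ) - 1) := by
    have : rr p (2*m+5) = q := by rw [hq, rr]; congr 1; omega
    rw [show 2*m+5 = 2*m+3+2 by ring, phiSeq_two, hz0 (2*m+3) (by omega), show 2*m+3+2 = 2*m+5 by ring, this]; ring
  have e6 : phiSeq p h (2*m+5+1) 0 = -(1/(q:ℂ) - 1) := by
    have : rr p (2*m+6) = q := by rw [hq, rr]; congr 1; omega
    rw [show 2*m+5+1 = 2*m+4+2 by ring, phiSeq_two, hz0 (2*m+4) (by omega),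
      show 2*m+4+2 = 2*m+6 by ring, this]; ring
  have E0 := (hrec 0).large hδ (2*m+5) (by simpa only [e5] using hcn) (by simpa only [e6] using hcn)
  -- the escape sets
  set U : ℕ → Set ℂ := fun n => {z | 1 < ‖phiSeq p h n z‖ ∧ 1 < ‖phiSeq p h (n+1) z‖} with hU
  have hUo : ∀ n, IsOpen (U n) := fun n =>
    (isOpen_lt continuous_const (phi_cont p h n).norm).inter
      (isOpen_lt continuous_const (phi_cont p h (n+1)).norm)
  have hUF : ∀ n, ∀ z ∈ U n, z ∉ Fset p h := by
    rintro n z ⟨h1, h2⟩ ⟨C, hC⟩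
    obtain ⟨N, hN⟩ := (hrec z).large hδ n h1 h2 C
    exact absurd (hC N) (not_le.2 (hN N le_rfl))
  have hUm : ∀ n j, n ≤ j → U n ⊆ U j := by
    rintro n j hj z ⟨h1, h2⟩
    exact ⟨(hrec z).mono hδ n h1 h2 j hj, (hrec z).mono hδ n h1 h2 (j+1) (by omega)⟩
  obtain ⟨ρ, hρ⟩ : ∃ ρ : ℝ, ∀ z, ρ < ‖z‖ → z ∈ U 0 := by
    have ht : Filter.Tendsto (fun x => ‖h.eval x‖) (Bornology.cobounded ℂ) Filter.atTop :=
      h.tendsto_norm_atTop (Polynomial.natDegree_pos_iff_degree_pos.1 hdeg)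
        tendsto_norm_cobounded_atTop
    have h1 := (ht.eventually_gt_atTop 1).and
      ((tendsto_norm_cobounded_atTop (E := ℂ)).eventually_gt_atTop 1)
    rw [← comap_norm_atTop, Filter.eventually_comap] at h1
    obtain ⟨ρ, hρ⟩ := Filter.eventually_atTop.1 h1
    refine ⟨ρ, fun z hz => ?_⟩
    have := hρ ‖z‖ hz.le z rfl
    exact ⟨this.2, this.1⟩
  have hcb : IsCompact (Metric.closedBall (0:ℂ) ρ) := isCompact_closedBall _ _
  obtain ⟨A, hA⟩ : ∃ A : ℝ, ∀ z ∈ Metric.closedBall (0:ℂ) ρ, ∀ n, n < 4 → ‖phiSeq p h n z‖ ≤ A := by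
    choose A hA using fun n => hcb.exists_bound_of_continuousOn (phi_cont p h n).continuousOn
    refine ⟨max (max (A 0) (A 1)) (max (A 2) (A 3)), fun z hz n hn => (hA n z hz).trans ?_⟩
    interval_cases n <;> simp
  obtain ⟨R, hR1, hR⟩ := IsRec.bdd hδ A
  have hin : ∀ z, (∀ n, z ∉ U n) → z ∈ Metric.closedBall (0:ℂ) ρ ∧ ∀ n, ‖phiSeq p h n z‖ ≤ R := by
    intro z hz
    have hzb : z ∈ Metric.closedBall (0:ℂ) ρ := by
      rw [mem_closedBall_zero_iff]
      by_contra! hc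
      exact hz 0 (hρ z hc)
    refine ⟨hzb, hR _ _ (hrec z) (hA z hzb) (fun n => ?_)⟩
    by_contra! hc
    exact hz n hc
  have hFeq : Fset p h = (⋃ n, U n)ᶜ := by
    ext z
    simp only [Set.mem_compl_iff, Set.mem_iUnion, not_exists]
    exact ⟨fun hz n hn => hUF n z hn hz, fun hz => ⟨R, (hin z hz).2⟩⟩
  have hFin : ∀ z ∈ Fset p h, ∀ n, z ∉ U n := fun z hz n hn => hUF n z hn hz
  have hFc : IsCompact (Fset p h) := by
    refine hcb.of_isClosed_subset ?_ (fun z hz => (hin z (hFin z hz)).1)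
    rw [hFeq]
    exact (isOpen_iUnion hUo).isClosed_compl
  -- the neighbourhood
  obtain ⟨N, hN⟩ := E0 (2/δ*(R+1))
  have hOo : IsOpen {z | ‖phiSeq p h N z‖ < R+1 ∧ ‖phiSeq p h (N+1) z‖ < R+1} :=
    (isOpen_lt (phi_cont p h N).norm continuous_const).inter
      (isOpen_lt (phi_cont p h (N+1)).norm continuous_const)
  obtain ⟨ε, hε, hεO⟩ := hFc.exists_thickening_subset_open hOo (fun z hz => by
    have := (hin z (hFin z hz)).2
    exact ⟨by linarith [this N], by linarith [this (N+1)]⟩)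
  set X := Metric.thickening ε (Fset p h) with hX
  have hXo : IsOpen X := Metric.isOpen_thickening
  have hXc : IsPreconnected X := by
    rw [hX, ← add_ball_zero, ← Set.add_image_prod]
    exact (hconn.isPreconnected.prod (convex_ball (0:ℂ) ε).isPreconnected).image _
      (by fun_prop)
  obtain ⟨M, hM⟩ : ∃ M, Metric.closedBall (0:ℂ) ρ ∩ Xᶜ ⊆ U M := by
    refine (hcb.inter_right hXo.isClosed_compl).elim_directed_cover U hUo ?_
      (directed_of_isDirected_le (fun i j hij => hUm i j hij))
    rintro z ⟨-, hz⟩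
    by_contra hc
    apply hz
    apply Metric.self_subset_thickening hε
    rw [hFeq]
    exact hc
  have hMX : ∀ z, z ∉ X → z ∈ U M := by
    intro z hz
    by_cases hc : ρ < ‖z‖
    · exact hUm 0 M (by omega) (hρ z hc)
    · exact hM ⟨by rw [mem_closedBall_zero_iff]; exact not_lt.1 hc, hz⟩
  -- apply the key lemma to `φ_{N+M+1}`
  have hκ : 1 ≤ 2/δ := by rw [le_div_iff₀ hδ]; linarith
  have ht1 := tb_ge (2/δ) (R+1) hκ (by linarith) (M+1)
  refine key_lemma (phiPoly p h (N+(M+1))) (phiPoly_deg p h hdeg hrne _) X hXo hXc ?_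
    (tb (2/δ) (R+1) (M+1)) (by linarith) ?_ 0 ?_ (phiPoly_der p h hc0 hc1 (N+M))
  · intro z hz
    by_contra hzX
    have := hUm M (N+(M+1)) (by omega) (hMX z hzX)
    rw [phiPoly_eval] at hz
    have h1 := this.1
    rw [hz, norm_zero] at h1
    linarith
  · intro z hz
    rw [phiPoly_eval]
    have := hεO hz
    exact tb_up hδ hδ1 (hrec z) N (R+1) (by linarith) this.1.le this.2.le (M+1)
  · rw [phiPoly_eval]
    have := tb_low hδ hδ1 (hrec 0) N (R+1) (by linarith) (hN N le_rfl) (hN (N+1) (by omega)) (M+1)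
    refine lt_of_le_of_lt ?_ this
    nlinarith
end
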